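/- arXiv:1808.07892 — 2 statements merged into one kernel-verified Lean document; each statement's English description precedes it below -/
import Mathlib

section
/- Let ε ∈ (0,1], k ∈ {0,1}, ε_k = (k+ε)/2, and let p be a strictly pseudoconvex boundary point of class C^{k+2,ε} of a domain Ω in ℂⁿ. Then there exist a neighborhood U of p, an injective holomorphic map Φ : U → ℂⁿ with Φ(p) = 0, and a constant C > 0, such that every point ζ = (ζ₁, ζ') ∈ ℂ × ℂ^{n−1} of Φ(∂Ω ∩ U) satisfies | Re ζ₁ − |ζ'|² | ≤ C·( |ζ'|^{2+2ε_k} + |Im ζ₁|^{2+2ε_k} ); that is, ∂Ω is approximated near p, to order 2 + 2ε_k, by a biholomorphic image of a sphere. -/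
open Metric MeasureTheory Set
open scoped NNReal ENNReal

noncomputable section

/-- Complex Euclidean `n`-space. -/
abbrev Cn (n : ℕ) := EuclideanSpace ℂ (Fin n)

variable {n : ℕ}

instance : MeasurableSpace (Cn n) := borel _
instance : BorelSpace (Cn n) := ⟨rfl⟩
instance : InnerProductSpace ℝ (Cn n) := InnerProductSpace.rclikeToReal ℂ _

/-- `δ_Ω(z)`: the Euclidean distance from `z` to the boundary of `Ω`. -/
def bdist (Ω : Set (Cn n)) (z : Cn n) : ℝ := Metric.infDist z (frontier Ω)

/-- The squeezing function `σ_Ω(z)` of a (bounded) domain `Ω`. -/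
def squeezing (Ω : Set (Cn n)) (z : Cn n) : ℝ :=
  sSup {r : ℝ | 0 < r ∧ ∃ f : Cn n → Cn n,
    DifferentiableOn ℂ f Ω ∧ Set.InjOn f Ω ∧ Set.MapsTo f Ω (Metric.ball 0 1) ∧
    f z = 0 ∧ Metric.ball (0 : Cn n) r ⊆ f '' Ω}

/-- The Kobayashi metric `κ_Ω(z;X)`. -/
def kobayashi (Ω : Set (Cn n)) (z X : Cn n) : ℝ :=
  sInf {r : ℝ | ∃ (α : ℂ) (φ : ℂ → Cn n),
    DifferentiableOn ℂ φ (Metric.ball 0 1) ∧ Set.MapsTo φ (Metric.ball 0 1) Ω ∧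
    φ 0 = z ∧ α • deriv φ 0 = X ∧ r = ‖α‖}

/-- The Carathéodory metric `γ_Ω(z;X)`. -/
def caratheodory (Ω : Set (Cn n)) (z X : Cn n) : ℝ :=
  sSup {r : ℝ | ∃ f : Cn n → ℂ,
    DifferentiableOn ℂ f Ω ∧ Set.MapsTo f Ω (Metric.ball 0 1) ∧
    r = ‖fderiv ℂ f z X‖}

/-- `⟨∂ρ(q),X⟩ = Σ_j (∂ρ/∂z_j)(q) X_j`, expressed via the real differential:
`⟨∂ρ(q),X⟩ = (Dρ(q)X - i·Dρ(q)(iX))/2`. -/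
def cderiv (ρ : Cn n → ℝ) (q X : Cn n) : ℂ :=
  (((fderiv ℝ ρ q X : ℝ) : ℂ) - Complex.I * ((fderiv ℝ ρ q (Complex.I • X) : ℝ) : ℂ)) / 2

/-- The Levi form `L_ρ(q;X) = Σ_{j,k} (∂²ρ/∂z_j∂z̄_k)(q) X_j X̄_k`, expressed via the real
second differential: `L_ρ(q;X) = (D²ρ(q)[X,X] + D²ρ(q)[iX,iX])/4`. -/
def leviForm (ρ : Cn n → ℝ) (q X : Cn n) : ℝ :=
  (fderiv ℝ (fun w => fderiv ℝ ρ w X) q X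
    + fderiv ℝ (fun w => fderiv ℝ ρ w (Complex.I • X)) q (Complex.I • X)) / 4

/-- `p` is a strictly pseudoconvex boundary point of `Ω` of class `C^{m,ε}`. -/
def IsStrictPscPtHolder (Ω : Set (Cn n)) (p : Cn n) (m : ℕ) (ε : ℝ) : Prop :=
  p ∈ frontier Ω ∧ ∃ W : Set (Cn n), IsOpen W ∧ p ∈ W ∧ ∃ ρ : Cn n → ℝ,
    ContDiffOn ℝ m ρ W ∧
    (∃ C : ℝ≥0, HolderOnWith C ε.toNNReal (iteratedFDeriv ℝ m ρ) W) ∧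
    Ω ∩ W = {z ∈ W | ρ z < 0} ∧
    (∀ q ∈ frontier Ω ∩ W, fderiv ℝ ρ q ≠ 0) ∧
    (∀ q ∈ frontier Ω ∩ W, ∀ X : Cn n, X ≠ 0 → cderiv ρ q X = 0 → 0 < leviForm ρ q X)

/-- `p` is a strictly pseudoconvex boundary point of `Ω` of class `C²`. -/
def IsStrictPscPtC2 (Ω : Set (Cn n)) (p : Cn n) : Prop :=
  p ∈ frontier Ω ∧ ∃ W : Set (Cn n), IsOpen W ∧ p ∈ W ∧ ∃ ρ : Cn n → ℝ,
    ContDiffOn ℝ 2 ρ W ∧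
    Ω ∩ W = {z ∈ W | ρ z < 0} ∧
    (∀ q ∈ frontier Ω ∩ W, fderiv ℝ ρ q ≠ 0) ∧
    (∀ q ∈ frontier Ω ∩ W, ∀ X : Cn n, X ≠ 0 → cderiv ρ q X = 0 → 0 < leviForm ρ q X)

/-- An open set `D ⊆ ℂⁿ` is pseudoconvex: `u = -log dist(·, Dᶜ)` is plurisubharmonic on `D`. -/
def IsPseudoconvex (D : Set (Cn n)) : Prop :=
  IsOpen D ∧
  UpperSemicontinuousOn (fun z => -Real.log (Metric.infDist z Dᶜ)) D ∧
  ∀ a ∈ D, ∀ w : Cn n, ∀ r : ℝ, 0 < r →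
    (∀ l : ℂ, ‖l‖ ≤ r → a + l • w ∈ D) →
    -Real.log (Metric.infDist a Dᶜ) ≤
      (1 / (2 * Real.pi)) * ∫ θ in (0:ℝ)..(2 * Real.pi),
        -Real.log (Metric.infDist (a + ((r : ℂ) * Complex.exp (θ * Complex.I)) • w) Dᶜ)

/-- `cl(Ω)` admits a Stein neighborhood basis. -/
def HasSteinBasis (Ω : Set (Cn n)) : Prop :=
  ∀ W : Set (Cn n), IsOpen W → closure Ω ⊆ W →
    ∃ U : Set (Cn n), IsPseudoconvex U ∧ closure Ω ⊆ U ∧ U ⊆ W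

/-- The squared `L²`-norm of `f` on `D` (as an extended nonnegative real). -/
def L2normSq (D : Set (Cn n)) (f : Cn n → ℂ) : ℝ≥0∞ := ∫⁻ w in D, (‖f w‖₊ : ℝ≥0∞) ^ 2

/-- `J⁰_D(z) = sup {|f(z)|² : f ∈ L²_h(D), ‖f‖_D ≤ 1}`; equals the Bergman kernel on the
diagonal. -/
def J0 (D : Set (Cn n)) (z : Cn n) : ℝ :=
  sSup {v : ℝ | ∃ f : Cn n → ℂ, DifferentiableOn ℂ f D ∧ L2normSq D f ≤ 1 ∧ v = ‖f z‖ ^ 2}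

/-- `J¹_D(z;X) = sup {|f'(z)X|² : f ∈ L²_h(D), ‖f‖_D ≤ 1, f(z) = 0}`. -/
def J1 (D : Set (Cn n)) (z X : Cn n) : ℝ :=
  sSup {v : ℝ | ∃ f : Cn n → ℂ, DifferentiableOn ℂ f D ∧ L2normSq D f ≤ 1 ∧ f z = 0 ∧
    v = ‖fderiv ℂ f z X‖ ^ 2}

/-- `J²_D(z;X,Y) = sup {|Σ_{j,k} f_{ζ_jζ_k}(z) X_j Y_k|² : f ∈ L²_h(D), ‖f‖_D ≤ 1,
f(z) = 0, f'(z) = 0}`. -/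
def J2 (D : Set (Cn n)) (z X Y : Cn n) : ℝ :=
  sSup {v : ℝ | ∃ f : Cn n → ℂ, DifferentiableOn ℂ f D ∧ L2normSq D f ≤ 1 ∧ f z = 0 ∧
    fderiv ℂ f z = 0 ∧ v = ‖fderiv ℂ (fun w => fderiv ℂ f w Y) z X‖ ^ 2}

/-- The Bergman metric `β_D(z;X) = (J¹_D(z;X)/J⁰_D(z))^{1/2}`. -/
def bergman (D : Set (Cn n)) (z X : Cn n) : ℝ := Real.sqrt (J1 D z X / J0 D z)

/-- The bisectional curvature of the Bergman metric. -/
def bisect (D : Set (Cn n)) (z X Y : Cn n) : ℝ :=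
  2 - J0 D z * J2 D z X Y / (J1 D z X * J1 D z Y)

/-- The holomorphic sectional curvature `s_D(z;X)` of the Bergman metric. -/
def sectCurv (D : Set (Cn n)) (z X : Cn n) : ℝ := bisect D z X X

/-- The Ricci curvature `r_D(z;X)` of the Bergman metric (w.r.t. the standard basis). -/
def ricciCurv (D : Set (Cn n)) (z X : Cn n) : ℝ :=
  ∑ j : Fin n, bisect D z (EuclideanSpace.single j 1) X

/-- The scalar curvature `t_D(z)` of the Bergman metric. -/
def scalarCurv (D : Set (Cn n)) (z : Cn n) : ℝ :=
  ∑ j : Fin n, ricciCurv D z (EuclideanSpace.single j 1)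

/-- `M(z;X) = ( |⟨∂δ_Ω(z),X⟩|²/δ_Ω(z)² + L(z;X)/δ_Ω(z) )^{1/2}`, where `L` is the Levi form
of `-δ_Ω`. -/
def Mfun (Ω : Set (Cn n)) (z X : Cn n) : ℝ :=
  Real.sqrt (‖cderiv (bdist Ω) z X‖ ^ 2 / (bdist Ω z) ^ 2
    + leviForm (fun w => -(bdist Ω w)) z X / bdist Ω z)

/-- The sesquilinear form of the Bergman metric, recovered from `β²` by polarization. -/
def bergForm (D : Set (Cn n)) (z X Y : Cn n) : ℂ :=
  (((J1 D z (X + Y) / J0 D z : ℝ) : ℂ) - ((J1 D z (X - Y) / J0 D z : ℝ) : ℂ)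
    + Complex.I * ((J1 D z (X + Complex.I • Y) / J0 D z : ℝ) : ℂ)
    - Complex.I * ((J1 D z (X - Complex.I • Y) / J0 D z : ℝ) : ℂ)) / 4

/-- The Hermitian matrix `(B_{jk}(z))` of the Bergman metric in the standard coordinates. -/
def bergMat (D : Set (Cn n)) (z : Cn n) : Matrix (Fin n) (Fin n) ℂ :=
  fun j k => bergForm D z (EuclideanSpace.single j 1) (EuclideanSpace.single k 1)

/-- The canonical Bergman invariant `J_D(z) = Δ_D(z)/K_D(z)`. -/
def canonInvariant (D : Set (Cn n)) (z : Cn n) : ℂ :=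
  (bergMat D z).det / ((J0 D z : ℝ) : ℂ)

/-- Real quadratic forms. -/
def Q2 (n : ℕ) : Submodule ℝ (Cn n → ℝ) :=
  Submodule.span ℝ {f | ∃ X Y : Cn n →L[ℂ] ℂ, f = fun w => (X w).re * (Y w).re}

/-- Real cubic forms. -/
def Q3 (n : ℕ) : Submodule ℝ (Cn n → ℝ) :=
  Submodule.span ℝ {f | ∃ X Y Z : Cn n →L[ℂ] ℂ, f = fun w => (X w).re * (Y w).re * (Z w).re}

/-- Complex quadratic forms. -/
def H2 (n : ℕ) : Submodule ℂ (Cn n → ℂ) :=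
  Submodule.span ℂ {f | ∃ X Y : Cn n →L[ℂ] ℂ, f = fun w => X w * Y w}

/-- Complex cubic forms. -/
def H3 (n : ℕ) : Submodule ℂ (Cn n → ℂ) :=
  Submodule.span ℂ {f | ∃ X Y Z : Cn n →L[ℂ] ℂ, f = fun w => X w * Y w * Z w}

theorem Q2_mk (X Y : Cn n →L[ℂ] ℂ) : (fun w => (X w).re * (Y w).re) ∈ Q2 n :=
  Submodule.subset_span ⟨X, Y, rfl⟩

theorem Q3_mk (X Y Z : Cn n →L[ℂ] ℂ) : (fun w => (X w).re * (Y w).re * (Z w).re) ∈ Q3 n :=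
  Submodule.subset_span ⟨X, Y, Z, rfl⟩

theorem H2_mk (X Y : Cn n →L[ℂ] ℂ) : (fun w => X w * Y w) ∈ H2 n :=
  Submodule.subset_span ⟨X, Y, rfl⟩

theorem H3_mk (X Y Z : Cn n →L[ℂ] ℂ) : (fun w => X w * Y w * Z w) ∈ H3 n :=
  Submodule.subset_span ⟨X, Y, Z, rfl⟩

theorem Q2_comp {f : Cn n → ℝ} (hf : f ∈ Q2 n) (A : Cn n →L[ℂ] Cn n) :
    (fun w => f (A w)) ∈ Q2 n := by
  induction hf using Submodule.span_induction with
  | mem x h => obtain ⟨X, Y, rfl⟩ := h; exact Q2_mk (X.comp A) (Y.comp A)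
  | zero => exact Submodule.zero_mem _
  | add x y _ _ hx hy => exact Submodule.add_mem _ hx hy
  | smul a x _ hx => exact Submodule.smul_mem _ a hx

theorem Q3_comp {f : Cn n → ℝ} (hf : f ∈ Q3 n) (A : Cn n →L[ℂ] Cn n) :
    (fun w => f (A w)) ∈ Q3 n := by
  induction hf using Submodule.span_induction with
  | mem x h => obtain ⟨X, Y, Z, rfl⟩ := h; exact Q3_mk (X.comp A) (Y.comp A) (Z.comp A)
  | zero => exact Submodule.zero_mem _
  | add x y _ _ hx hy => exact Submodule.add_mem _ hx hy
  | smul a x _ hx => exact Submodule.smul_mem _ a hx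

theorem Q2_mul {f : Cn n → ℝ} (hf : f ∈ Q2 n) (Z : Cn n →L[ℂ] ℂ) :
    (fun w => f w * (Z w).re) ∈ Q3 n := by
  induction hf using Submodule.span_induction with
  | mem x h => obtain ⟨X, Y, rfl⟩ := h; exact Q3_mk X Y Z
  | zero => simp; exact Submodule.zero_mem (Q3 n)
  | add x y _ _ hx hy =>
    convert Submodule.add_mem _ hx hy using 1
    funext w; simp [add_mul]
  | smul a x _ hx =>
    convert Submodule.smul_mem _ a hx using 1
    funext w; simp [mul_assoc]

theorem H2_re {f : Cn n → ℂ} (hf : f ∈ H2 n) : (fun w => (f w).re) ∈ Q2 n := by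
  suffices h : ∀ c : ℂ, (fun w => (c * f w).re) ∈ Q2 n by simpa using h 1
  induction hf using Submodule.span_induction with
  | mem x h =>
    obtain ⟨X, Y, rfl⟩ := h
    intro c
    have h1 := Q2_mk (c • X) Y
    have h2 := Q2_mk ((Complex.I * c) • X) (Complex.I • Y)
    convert Submodule.sub_mem _ h1 h2 using 1
    funext w; simp; ring
  | zero => intro c; simp; exact Submodule.zero_mem (Q2 n)
  | add x y _ _ hx hy =>
    intro c
    convert Submodule.add_mem _ (hx c) (hy c) using 1
    funext w; simp [mul_add]
  | smul a x _ hx =>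
    intro c
    convert hx (c * a) using 1
    funext w; simp only [Pi.smul_apply, smul_eq_mul]; congr 1; ring

/-- `Re (G * conj Z)` is a real cubic form. -/
theorem H2_re_conj {f : Cn n → ℂ} (hf : f ∈ H2 n) (Z : Cn n →L[ℂ] ℂ) :
    (fun w => (f w * (starRingEnd ℂ) (Z w)).re) ∈ Q3 n := by
  have h1 := Q2_mul (H2_re hf) Z
  have h2 := Q2_mul (H2_re (Submodule.smul_mem _ Complex.I hf)) (Complex.I • Z)
  convert Submodule.add_mem _ h1 h2 using 1
  funext w; simp

theorem H3_re {f : Cn n → ℂ} (hf : f ∈ H3 n) : (fun w => (f w).re) ∈ Q3 n := by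
  suffices h : ∀ c : ℂ, (fun w => (c * f w).re) ∈ Q3 n by simpa using h 1
  induction hf using Submodule.span_induction with
  | mem x h =>
    obtain ⟨X, Y, Z, rfl⟩ := h
    intro c
    have h1 := Q2_mul (H2_re (H2_mk (c • X) Y)) Z
    have h2 := Q2_mul (H2_re (H2_mk ((Complex.I * c) • X) Y)) (Complex.I • Z)
    convert Submodule.sub_mem _ h1 h2 using 1
    funext w; simp; ring
  | zero => intro c; simp; exact Submodule.zero_mem (Q3 n)
  | add x y _ _ hx hy =>
    intro c
    convert Submodule.add_mem _ (hx c) (hy c) using 1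
    funext w; simp [mul_add]
  | smul a x _ hx =>
    intro c
    convert hx (c * a) using 1
    funext w; simp only [Pi.smul_apply, smul_eq_mul]; congr 1; ring

theorem Q2_bound {f : Cn n → ℝ} (hf : f ∈ Q2 n) : ∃ C, 0 ≤ C ∧ ∀ w, |f w| ≤ C * ‖w‖ ^ 2 := by
  induction hf using Submodule.span_induction with
  | mem x h =>
    obtain ⟨X, Y, rfl⟩ := h
    refine ⟨‖X‖ * ‖Y‖, by positivity, fun w => ?_⟩
    rw [abs_mul]
    calc _ ≤ (‖X‖ * ‖w‖) * (‖Y‖ * ‖w‖) := by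
          gcongr
          · exact (Complex.abs_re_le_norm _).trans (X.le_opNorm w)
          · exact (Complex.abs_re_le_norm _).trans (Y.le_opNorm w)
      _ = _ := by ring
  | zero => exact ⟨0, le_rfl, by simp⟩
  | add x y _ _ hx hy =>
    obtain ⟨C, h0, h⟩ := hx
    obtain ⟨D, h0', h'⟩ := hy
    refine ⟨C + D, by positivity, fun w => ?_⟩
    have := abs_add_le (x w) (y w)
    simp only [Pi.add_apply]
    nlinarith [h w, h' w]
  | smul a x _ hx =>
    obtain ⟨C, h0, h⟩ := hx
    refine ⟨|a| * C, by positivity, fun w => ?_⟩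
    simp only [Pi.smul_apply, smul_eq_mul, abs_mul, mul_assoc]
    exact mul_le_mul_of_nonneg_left (h w) (abs_nonneg a)

theorem Q3_bound {f : Cn n → ℝ} (hf : f ∈ Q3 n) : ∃ C, 0 ≤ C ∧ ∀ w, |f w| ≤ C * ‖w‖ ^ 3 := by
  induction hf using Submodule.span_induction with
  | mem x h =>
    obtain ⟨X, Y, Z, rfl⟩ := h
    refine ⟨‖X‖ * ‖Y‖ * ‖Z‖, by positivity, fun w => ?_⟩
    rw [abs_mul, abs_mul]
    calc _ ≤ (‖X‖ * ‖w‖) * (‖Y‖ * ‖w‖) * (‖Z‖ * ‖w‖):= by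
          gcongr
          · exact (Complex.abs_re_le_norm _).trans (X.le_opNorm w)
          · exact (Complex.abs_re_le_norm _).trans (Y.le_opNorm w)
          · exact (Complex.abs_re_le_norm _).trans (Z.le_opNorm w)
      _ = _ := by ring
  | zero => exact ⟨0, le_rfl, by simp⟩
  | add x y _ _ hx hy =>
    obtain ⟨C, h0, h⟩ := hx
    obtain ⟨D, h0', h'⟩ := hy
    refine ⟨C + D, by positivity, fun w => ?_⟩
    have := abs_add_le (x w) (y w)
    simp only [Pi.add_apply]
    nlinarith [h w, h' w]
  | smul a x _ hx =>
    obtain ⟨C, h0, h⟩ := hx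
    refine ⟨|a| * C, by positivity, fun w => ?_⟩
    simp only [Pi.smul_apply, smul_eq_mul, abs_mul, mul_assoc]
    exact mul_le_mul_of_nonneg_left (h w) (abs_nonneg a)

theorem H2_bound {f : Cn n → ℂ} (hf : f ∈ H2 n) : ∃ C, 0 ≤ C ∧ ∀ w, ‖f w‖ ≤ C * ‖w‖ ^ 2 := by
  obtain ⟨C, h0, h⟩ := Q2_bound (H2_re hf)
  obtain ⟨D, h0', h'⟩ := Q2_bound (H2_re (Submodule.smul_mem _ Complex.I hf))
  refine ⟨C + D, by positivity, fun w => ?_⟩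
  have h1 := h w
  have h2 := h' w
  simp at h2
  have := Complex.norm_le_abs_re_add_abs_im (f w)
  nlinarith

/-- Splitting along the real direction `e`. -/
theorem Q2_split {f : Cn n → ℝ} (hf : f ∈ Q2 n) (e : Cn n) :
    ∃ (Z : Cn n →L[ℂ] ℂ) (c : ℝ), ∀ w (s : ℝ),
      f (w + (s : ℂ) • e) = f w + s * (Z w).re + s ^ 2 * c := by
  induction hf using Submodule.span_induction with
  | mem x h =>
    obtain ⟨X, Y, rfl⟩ := h
    refine ⟨((X e).re : ℂ) • Y + ((Y e).re : ℂ) • X, (X e).re * (Y e).re, fun w s => ?_⟩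
    simp; ring
  | zero => exact ⟨0, 0, by simp⟩
  | add x y _ _ hx hy =>
    obtain ⟨Z, c, h⟩ := hx
    obtain ⟨Z', c', h'⟩ := hy
    refine ⟨Z + Z', c + c', fun w s => ?_⟩
    simp only [Pi.add_apply, h, h', add_apply, Complex.add_re]
    ring
  | smul a x _ hx =>
    obtain ⟨Z, c, h⟩ := hx
    refine ⟨(a : ℂ) • Z, a * c, fun w s => ?_⟩
    simp only [Pi.smul_apply, h, smul_eq_mul]
    simp
    ring

theorem Q3_split {f : Cn n → ℝ} (hf : f ∈ Q3 n) (e : Cn n) :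
    ∃ g ∈ Q2 n, ∃ (Z : Cn n →L[ℂ] ℂ) (c : ℝ), ∀ w (s : ℝ),
      f (w + (s : ℂ) • e) = f w + s * g w + s ^ 2 * (Z w).re + s ^ 3 * c := by
  induction hf using Submodule.span_induction with
  | mem x h =>
    obtain ⟨X, Y, Z, rfl⟩ := h
    refine ⟨_, Submodule.add_mem _ (Submodule.add_mem _ (Q2_mk (((X e).re : ℂ) • Y) Z)
      (Q2_mk (((Y e).re : ℂ) • X) Z)) (Q2_mk (((Z e).re : ℂ) • X) Y),
      (((Y e).re * (Z e).re : ℝ) : ℂ) • X + (((X e).re * (Z e).re : ℝ) : ℂ) • Y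
       + (((X e).re * (Y e).re : ℝ) : ℂ) • Z, (X e).re * (Y e).re * (Z e).re, fun w s => ?_⟩
    simp; ring
  | zero => exact ⟨0, Submodule.zero_mem _, 0, 0, by simp⟩
  | add x y _ _ hx hy =>
    obtain ⟨g, hg, Z, c, h⟩ := hx
    obtain ⟨g', hg', Z', c', h'⟩ := hy
    refine ⟨g + g', Submodule.add_mem _ hg hg', Z + Z', c + c', fun w s => ?_⟩
    simp only [Pi.add_apply, h, h', add_apply, Complex.add_re]
    ring
  | smul a x _ hx =>
    obtain ⟨g, hg, Z, c, h⟩ := hx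
    refine ⟨a • g, Submodule.smul_mem _ _ hg, (a : ℂ) • Z, a * c, fun w s => ?_⟩
    simp only [Pi.smul_apply, h, smul_eq_mul]
    simp
    ring

/-- A coordinate function. -/
def co (i : Fin n) : Cn n →L[ℂ] ℂ := EuclideanSpace.proj i

@[simp] theorem co_apply (i : Fin n) (w : Cn n) : co i w = w i := rfl

/-- The tangential projection. -/
def tproj (i0 : Fin n) : Cn n →L[ℂ] Cn n :=
  ContinuousLinearMap.id ℂ _ - (co i0).smulRight (EuclideanSpace.single i0 (1 : ℂ))

theorem tproj_apply (i0 : Fin n) (w : Cn n) :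
    tproj i0 w = w - w i0 • EuclideanSpace.single i0 (1 : ℂ) := by
  simp [tproj]

theorem Q2_vanish {f : Cn n → ℝ} (hf : f ∈ Q2 n) (i0 : Fin n)
    (h0 : ∀ w : Cn n, (w i0).re = 0 → f w = 0) :
    ∃ Z : Cn n →L[ℂ] ℂ, ∀ w, f w = (w i0).re * (Z w).re := by
  obtain ⟨Z, c, h⟩ := Q2_split hf (EuclideanSpace.single i0 (1 : ℂ))
  refine ⟨Z + ((c : ℂ) - ((Z (EuclideanSpace.single i0 (1 : ℂ))).re : ℂ)) • co i0, fun w => ?_⟩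
  have := h (w - ((w i0).re : ℂ) • EuclideanSpace.single i0 (1 : ℂ)) (w i0).re
  rw [h0 (w - ((w i0).re : ℂ) • EuclideanSpace.single i0 (1 : ℂ)) (by simp), sub_add_cancel] at this
  rw [this]
  simp
  ring

theorem Q3_vanish {f : Cn n → ℝ} (hf : f ∈ Q3 n) (i0 : Fin n)
    (h0 : ∀ w : Cn n, (w i0).re = 0 → f w = 0) :
    ∃ C, 0 ≤ C ∧ ∀ w, |f w| ≤ C * (|(w i0).re| * ‖w‖ ^ 2) := by
  obtain ⟨g, hg, Z, c, h⟩ := Q3_split hf (EuclideanSpace.single i0 (1 : ℂ))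
  obtain ⟨D, hD0, hD⟩ := Q2_bound hg
  refine ⟨D * 4 + ‖Z‖ * 2 + |c|, by positivity, fun w => ?_⟩
  set v := w - ((w i0).re : ℂ) • EuclideanSpace.single i0 (1 : ℂ) with hv
  have := h v (w i0).re
  rw [h0 v (by simp [hv]), hv, sub_add_cancel, ← hv] at this
  have hs : |(w i0).re| ≤ ‖w‖ := (Complex.abs_re_le_norm _).trans (PiLp.norm_apply_le w i0)
  have hvn : ‖v‖ ≤ 2 * ‖w‖ := by
    calc ‖v‖ ≤ ‖w‖ + ‖((w i0).re : ℂ) • EuclideanSpace.single i0 (1 : ℂ)‖ := norm_sub_le _ _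
      _ ≤ ‖w‖ + ‖w‖ := by
        gcongr
        simpa [norm_smul] using hs
      _ = _ := by ring
  have hZ : |(Z v).re| ≤ ‖Z‖ * (2 * ‖w‖) :=
    (Complex.abs_re_le_norm _).trans ((Z.le_opNorm v).trans (by gcongr))
  have hgv : |g v| ≤ D * (2 * ‖w‖) ^ 2 := (hD v).trans (by gcongr)
  rw [this, zero_add]
  set s := (w i0).re
  calc |s * g v + s ^ 2 * (Z v).re + s ^ 3 * c|
      ≤ |s * g v| + |s ^ 2 * (Z v).re| + |s ^ 3 * c| := by
        exact (abs_add_le _ _).trans (by gcongr; exact abs_add_le _ _)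
    _ = |s| * (|g v| + |s| * |(Z v).re| + |s| * |s| * |c|) := by
        simp only [abs_mul, abs_pow]; ring
    _ ≤ |s| * (D * (2 * ‖w‖) ^ 2 + ‖w‖ * (‖Z‖ * (2 * ‖w‖)) + ‖w‖ * ‖w‖ * |c|) := by
        gcongr
    _ = _ := by ring
theorem solve2 {f : Cn n → ℝ} (hf : f ∈ Q2 n) (i0 : Fin n) :
    ∃ F ∈ H2 n, ∀ w : Cn n, (w i0).re = 0 →
      f w + (F w).re = (f (tproj i0 w) + f (Complex.I • tproj i0 w)) / 2 := by
  induction hf using Submodule.span_induction with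
  | mem x h =>
    obtain ⟨X, Y, rfl⟩ := h
    set e : Cn n := EuclideanSpace.single i0 (1 : ℂ) with he
    set F : Cn n → ℂ := fun w => -(1 / 2 : ℂ) * (X w * Y w) + (1 / 2 : ℂ) *
      ((starRingEnd ℂ (X e) * (w i0 * Y (tproj i0 w))) + (starRingEnd ℂ (Y e)) *
        (w i0 * X (tproj i0 w)) + (starRingEnd ℂ (Y e) * X e) * (w i0 * w i0)) with hF
    refine ⟨F, ?_, ?_⟩
    · have h1 := H2_mk X Y
      have h2 := H2_mk (co i0) (Y.comp (tproj i0))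
      have h3 := H2_mk (co i0) (X.comp (tproj i0))
      have h4 := H2_mk (co i0) (co i0)
      exact Submodule.add_mem _ (Submodule.smul_mem _ _ h1) (Submodule.smul_mem _ _
        (Submodule.add_mem _ (Submodule.add_mem _ (Submodule.smul_mem _ _ h2)
          (Submodule.smul_mem _ _ h3)) (Submodule.smul_mem _ _ h4)))
    · intro w hw
      have hX : X w = X (tproj i0 w) + w i0 * X e := by
        rw [tproj_apply, map_sub, map_smul, smul_eq_mul, sub_add_cancel]
      have hY : Y w = Y (tproj i0 w) + w i0 * Y e := by
        rw [tproj_apply, map_sub, map_smul, smul_eq_mul, sub_add_cancel]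
      simp only [hF, map_smul, hX, hY]
      generalize X (tproj i0 w) = x
      generalize Y (tproj i0 w) = y
      generalize X e = a
      generalize Y e = b
      simp [hw]
      ring
  | zero => exact ⟨0, Submodule.zero_mem _, by simp⟩
  | add x y _ _ hx hy =>
    obtain ⟨F, hF, h⟩ := hx
    obtain ⟨G, hG, h'⟩ := hy
    refine ⟨F + G, Submodule.add_mem _ hF hG, fun w hw => ?_⟩
    have := h w hw
    have := h' w hw
    simp only [Pi.add_apply, Complex.add_re]
    linarith
  | smul a x _ hx =>
    obtain ⟨F, hF, h⟩ := hx
    refine ⟨(a : ℂ) • F, Submodule.smul_mem _ _ hF, fun w hw => ?_⟩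
    have := h w hw
    simp only [Pi.smul_apply, smul_eq_mul, Complex.re_ofReal_mul, ← mul_add, this]
    ring

/-- Solvable cubics. -/
def Good3 (i0 : Fin n) (g : Cn n → ℝ) : Prop :=
    ∃ F ∈ H3 n, ∃ G : Fin n → Cn n → ℂ, (∀ j, G j ∈ H2 n) ∧ ∀ w : Cn n, (w i0).re = 0 →
      g w + (F w).re =
        2 * ∑ j ∈ Finset.univ.erase i0, (G j w * starRingEnd ℂ (w j)).re

theorem Good3.add {i0 : Fin n} {f g : Cn n → ℝ} (hf : Good3 i0 f) (hg : Good3 i0 g) :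
    Good3 i0 (fun w => f w + g w) := by
  obtain ⟨F, hF, G, hG, h⟩ := hf
  obtain ⟨F', hF', G', hG', h'⟩ := hg
  refine ⟨F + F', Submodule.add_mem _ hF hF', G + G',
    fun j => Submodule.add_mem _ (hG j) (hG' j), fun w hw => ?_⟩
  have h1 := h w hw
  have h2 := h' w hw
  simp only [Pi.add_apply, Complex.add_re, add_mul, Finset.sum_add_distrib, mul_add, ← h1, ← h2]
  ring

theorem Good3.smul {i0 : Fin n} {f : Cn n → ℝ} (hf : Good3 i0 f) (a : ℝ) :
    Good3 i0 (fun w => a * f w) := by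
  obtain ⟨F, hF, G, hG, h⟩ := hf
  refine ⟨(a : ℂ) • F, Submodule.smul_mem _ _ hF, fun j => (a : ℂ) • G j,
    fun j => Submodule.smul_mem _ _ (hG j), fun w hw => ?_⟩
  have h1 := h w hw
  simp only [Pi.smul_apply, smul_eq_mul, Complex.re_ofReal_mul, mul_assoc, ← Finset.mul_sum]
  linear_combination a * h1

theorem Good3_conj (i0 : Fin n) (X Y Z : Cn n →L[ℂ] ℂ) :
    Good3 i0 (fun w => (X w * Y w * starRingEnd ℂ (Z w)).re) := by
  have hZ : ∀ w, Z w = ∑ j, w j * Z (EuclideanSpace.single j 1) := by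
    intro w
    have : w = ∑ j, w j • (EuclideanSpace.single j (1 : ℂ) : Cn n) := by
      ext i
      simp [Finset.sum_apply, Pi.single_apply]
    conv_lhs => rw [this]
    simp [map_sum]
  set c : Fin n → ℂ := fun j => starRingEnd ℂ (Z (EuclideanSpace.single j 1)) with hc
  refine ⟨c i0 • fun w => X w * Y w * co i0 w, Submodule.smul_mem _ _ (H3_mk _ _ _),
    fun j => (c j / 2) • fun w => X w * Y w, fun j => Submodule.smul_mem _ _ (H2_mk _ _),
    fun w hw => ?_⟩
  have h1 : starRingEnd ℂ (Z w) = c i0 * starRingEnd ℂ (w i0) +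
      ∑ j ∈ Finset.univ.erase i0, c j * starRingEnd ℂ (w j) := by
    rw [Finset.add_sum_erase _ (fun j => c j * starRingEnd ℂ (w j)) (Finset.mem_univ i0), hZ w]
    simp [hc, map_sum, mul_comm]
  have h2 : starRingEnd ℂ (w i0) = - w i0 := by
    apply Complex.ext <;> simp [hw]
  simp only [Pi.smul_apply, smul_eq_mul, co_apply]
  rw [h1, h2, ← Complex.re_sum, ← Complex.add_re, ← Complex.re_ofReal_mul]
  congr 1
  rw [mul_add, Finset.mul_sum, Finset.mul_sum]
  rw [show ∀ a b c : ℂ, a + b + c = (a + c) + b by intros; ring]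
  convert zero_add _ using 2
  · ring
  · push_cast
    ring

theorem solve3 {g : Cn n → ℝ} (hg : g ∈ Q3 n) (i0 : Fin n) : Good3 i0 g := by
  induction hg using Submodule.span_induction with
  | mem x h =>
    obtain ⟨X, Y, Z, rfl⟩ := h
    have h0 : Good3 i0 (fun w => (X w * Y w * Z w).re) :=
      ⟨(-1 : ℂ) • fun w => X w * Y w * Z w, Submodule.smul_mem _ _ (H3_mk _ _ _), 0,
        fun j => Submodule.zero_mem _, by intro w _; simp⟩
    have := (((h0.add (Good3_conj i0 X Y Z)).add (Good3_conj i0 X Z Y)).add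
      (Good3_conj i0 Y Z X)).smul (1 / 4)
    convert this using 1
    funext w
    simp
    ring
  | zero => exact ⟨0, Submodule.zero_mem _, 0, fun j => Submodule.zero_mem _, by simp⟩
  | add x y _ _ hx hy => exact hx.add hy
  | smul a x _ hx => exact hx.smul a
theorem core (i0 : Fin n) (S : Set (Cn n)) {P2 P3 : Cn n → ℝ} (hP2 : P2 ∈ Q2 n) (hP3 : P3 ∈ Q3 n)
    {κ r C : ℝ} (hκ : 0 < κ) (hκ2 : κ ≤ 2) (hC : 0 ≤ C)
    (hS : ∀ u ∈ S, ‖u‖ < r → |-(u i0).re + P2 u + P3 u| ≤ C * ‖u‖ ^ (2 + κ))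
    (hL : ∀ v : Cn n, v i0 = 0 →
      (P2 v + P2 (Complex.I • v)) / 2 = ∑ j ∈ Finset.univ.erase i0, ‖v j‖ ^ 2) :
    ∃ F2 ∈ H2 n, ∃ F3 ∈ H3 n, ∃ G : Fin n → Cn n → ℂ, (∀ j, G j ∈ H2 n) ∧ ∃ C', 0 < C' ∧
      ∀ u ∈ S, ‖u‖ < r → ‖u‖ ≤ 1 →
        |(u i0 + F2 u + F3 u).re - ∑ j ∈ Finset.univ.erase i0, ‖u j + G j u‖ ^ 2|
          ≤ C' * ‖u‖ ^ (2 + κ) := by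
  obtain ⟨F2, hF2, h2⟩ := solve2 hP2 i0
  have hsum : ∀ w : Cn n, (P2 (tproj i0 w) + P2 (Complex.I • tproj i0 w)) / 2 =
      ∑ j ∈ Finset.univ.erase i0, ‖w j‖ ^ 2 := by
    intro w
    rw [hL _ (by simp [tproj_apply])]
    apply Finset.sum_congr rfl
    intro j hj
    have : j ≠ i0 := Finset.ne_of_mem_erase hj
    simp [tproj_apply, this]
  have hsq : (fun w : Cn n => ∑ j ∈ Finset.univ.erase i0, ‖w j‖ ^ 2) ∈ Q2 n := by
    have h1 := Q2_comp hP2 (tproj i0)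
    have h2 := Q2_comp hP2 (Complex.I • tproj i0)
    convert Submodule.smul_mem _ (1 / 2 : ℝ) (Submodule.add_mem _ h1 h2) using 1
    funext w
    rw [← hsum w]
    simp
    ring
  obtain ⟨Z, hZ⟩ := Q2_vanish (Submodule.sub_mem _ (Submodule.add_mem _ hP2 (H2_re hF2)) hsq) i0
    (by
      intro w hw
      have := h2 w hw
      rw [hsum w] at this
      simp [this])
  simp only [Pi.add_apply, Pi.sub_apply] at hZ
  have hg := Submodule.add_mem _ (Q2_mul hP2 Z) hP3
  obtain ⟨F3, hF3, G, hG, h3⟩ := solve3 hg i0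
  simp only [Pi.add_apply] at h3
  have hcub : (fun w : Cn n => 2 * ∑ j ∈ Finset.univ.erase i0,
      (G j w * starRingEnd ℂ (w j)).re) ∈ Q3 n := by
    have := Submodule.smul_mem (Q3 n) (2 : ℝ) (Submodule.sum_mem (Q3 n) (t := Finset.univ.erase i0)
      (f := fun j => fun w : Cn n => (G j w * starRingEnd ℂ (w j)).re)
      (fun j _ => H2_re_conj (hG j) (co j)))
    convert this using 1
    funext w
    simp
  obtain ⟨C3, hC3, hc3⟩ := Q3_vanish
    (Submodule.sub_mem _ (Submodule.add_mem _ hg (H3_re hF3)) hcub) i0 (by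
      intro w hw
      have := h3 w hw
      simp only [Pi.add_apply, Pi.sub_apply]
      linarith)
  simp only [Pi.add_apply, Pi.sub_apply] at hc3
  obtain ⟨A2, hA2, ha2⟩ := Q2_bound hP2
  obtain ⟨A3, hA3, ha3⟩ := Q3_bound hP3
  choose D hD0 hD using fun j => H2_bound (hG j)
  refine ⟨F2, hF2, F3, hF3, G, hG, C + C3 * (A2 + A3 + C) + (A3 + C) * ‖Z‖ +
    (∑ j ∈ Finset.univ.erase i0, D j ^ 2) + 1, by positivity, ?_⟩
  intro u hu hur hu1
  have hR := hS u hu hur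
  set N := ‖u‖ with hN
  have hN0 : 0 ≤ N := norm_nonneg _
  set M := N ^ (2 + κ) with hM
  have hM0 : 0 ≤ M := by positivity
  have hM4 : N ^ 4 ≤ M := by
    rw [hM, ← Real.rpow_natCast]
    exact Real.rpow_le_rpow_of_exponent_ge_of_imp hN0 hu1 (by push_cast; linarith)
      (by intro _ h; norm_num at h)
  have hM2 : M ≤ N ^ 2 := by
    rw [hM, ← Real.rpow_natCast]
    exact Real.rpow_le_rpow_of_exponent_ge_of_imp hN0 hu1 (by push_cast; linarith)
      (by intro _ h; linarith)
  set R := -(u i0).re + P2 u + P3 u with hRdef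
  have hs : (u i0).re = P2 u + P3 u - R := by rw [hRdef]; ring
  have hsn : |(u i0).re| ≤ (A2 + A3 + C) * N ^ 2 := by
    rw [hs]
    calc |P2 u + P3 u - R| ≤ |P2 u| + |P3 u| + |R| :=
          (abs_sub _ _).trans (add_le_add (abs_add_le _ _) le_rfl)
      _ ≤ A2 * N ^ 2 + A3 * N ^ 2 + C * N ^ 2 := by
          gcongr
          · exact ha2 u
          · refine (ha3 u).trans ?_
            exact mul_le_mul_of_nonneg_left
              (pow_le_pow_of_le_one hN0 hu1 (show 2 ≤ 3 by norm_num)) hA3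
          · exact hR.trans (by gcongr)
      _ = _ := by ring
  have hexp : ∑ j ∈ Finset.univ.erase i0, ‖u j + G j u‖ ^ 2 =
      ∑ j ∈ Finset.univ.erase i0, ‖u j‖ ^ 2
      + 2 * ∑ j ∈ Finset.univ.erase i0, (G j u * starRingEnd ℂ (u j)).re
      + ∑ j ∈ Finset.univ.erase i0, ‖G j u‖ ^ 2 := by
    rw [Finset.mul_sum, ← Finset.sum_add_distrib, ← Finset.sum_add_distrib]
    apply Finset.sum_congr rfl
    intro j _
    simp only [← Complex.normSq_eq_norm_sq, Complex.normSq_apply]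
    simp
    ring
  have hG2 : |∑ j ∈ Finset.univ.erase i0, ‖G j u‖ ^ 2| ≤
      (∑ j ∈ Finset.univ.erase i0, D j ^ 2) * M := by
    rw [abs_of_nonneg (by positivity), Finset.sum_mul]
    apply Finset.sum_le_sum
    intro j _
    calc ‖G j u‖ ^ 2 ≤ (D j * N ^ 2) ^ 2 := by gcongr; exact hD j u
      _ = D j ^ 2 * N ^ 4 := by ring
      _ ≤ _ := by gcongr
  set c3 := P2 u * (Z u).re + P3 u + (F3 u).re -
    2 * ∑ j ∈ Finset.univ.erase i0, (G j u * starRingEnd ℂ (u j)).re with hc3def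
  have hc3u : |c3| ≤ C3 * (A2 + A3 + C) * M := by
    refine (hc3 u).trans ?_
    calc C3 * (|(u i0).re| * N ^ 2) ≤ C3 * ((A2 + A3 + C) * N ^ 2 * N ^ 2) := by gcongr
      _ = C3 * (A2 + A3 + C) * N ^ 4 := by ring
      _ ≤ _ := by gcongr
  have hZu : |(P3 u - R) * (Z u).re| ≤ (A3 + C) * ‖Z‖ * M := by
    have hz : |(Z u).re| ≤ ‖Z‖ * N := (Complex.abs_re_le_norm _).trans (Z.le_opNorm u)
    rw [abs_mul]
    calc |P3 u - R| * |(Z u).re| ≤ (A3 * N ^ 3 + C * M) * (‖Z‖ * N) := by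
          gcongr
          exact (abs_sub _ _).trans (add_le_add (ha3 u) hR)
      _ = A3 * ‖Z‖ * N ^ 4 + C * ‖Z‖ * M * N := by ring
      _ ≤ A3 * ‖Z‖ * M + C * ‖Z‖ * M * 1 := by gcongr
      _ = _ := by ring
  have key : (u i0 + F2 u + F3 u).re - ∑ j ∈ Finset.univ.erase i0, ‖u j + G j u‖ ^ 2 =
      -R + c3 + (P3 u - R) * (Z u).re - ∑ j ∈ Finset.univ.erase i0, ‖G j u‖ ^ 2 := by
    rw [hexp, hc3def]
    have := hZ u
    simp only [Complex.add_re]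
    have h5 : (u i0).re * (Z u).re = (P2 u + P3 u - R) * (Z u).re := by rw [← hs]
    linear_combination hs + this + h5
  rw [key]
  calc _ ≤ |R| + |c3| + |(P3 u - R) * (Z u).re| + |∑ j ∈ Finset.univ.erase i0, ‖G j u‖ ^ 2| := by
        refine (abs_sub _ _).trans ?_
        gcongr
        refine (abs_add_le _ _).trans ?_
        gcongr
        refine (abs_add_le _ _).trans ?_
        rw [abs_neg]
    _ ≤ C * M + C3 * (A2 + A3 + C) * M + (A3 + C) * ‖Z‖ * M +
        (∑ j ∈ Finset.univ.erase i0, D j ^ 2) * M := by gcongr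
    _ ≤ _ := by nlinarith
theorem H2_reg {f : Cn n → ℂ} (hf : f ∈ H2 n) :
    Differentiable ℂ f ∧ HasStrictFDerivAt f (0 : Cn n →L[ℂ] ℂ) 0 ∧ f 0 = 0 := by
  induction hf using Submodule.span_induction with
  | mem x h =>
    obtain ⟨X, Y, rfl⟩ := h
    refine ⟨by fun_prop, ?_, by simp⟩
    have := (X.hasStrictFDerivAt (x := 0)).mul (Y.hasStrictFDerivAt (x := 0))
    exact this.congr_fderiv (by ext; simp)
  | zero => exact ⟨by simp [differentiable_zero], hasStrictFDerivAt_const 0 0, rfl⟩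
  | add x y _ _ hx hy =>
    exact ⟨hx.1.add hy.1, by simpa using hx.2.1.add hy.2.1, by simp [hx.2.2, hy.2.2]⟩
  | smul a x _ hx =>
    exact ⟨hx.1.const_smul a, by simpa using hx.2.1.const_smul a, by simp [hx.2.2]⟩

theorem H3_reg {f : Cn n → ℂ} (hf : f ∈ H3 n) :
    Differentiable ℂ f ∧ HasStrictFDerivAt f (0 : Cn n →L[ℂ] ℂ) 0 ∧ f 0 = 0 := by
  induction hf using Submodule.span_induction with
  | mem x h =>
    obtain ⟨X, Y, Z, rfl⟩ := h
    refine ⟨by fun_prop, ?_, by simp⟩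
    have := ((X.hasStrictFDerivAt (x := 0)).mul (Y.hasStrictFDerivAt (x := 0))).mul
      (Z.hasStrictFDerivAt (x := 0))
    exact this.congr_fderiv (by ext; simp)
  | zero => exact ⟨by simp [differentiable_zero], hasStrictFDerivAt_const 0 0, rfl⟩
  | add x y _ _ hx hy =>
    exact ⟨hx.1.add hy.1, by simpa using hx.2.1.add hy.2.1, by simp [hx.2.2, hy.2.2]⟩
  | smul a x _ hx =>
    exact ⟨hx.1.const_smul a, by simpa using hx.2.1.const_smul a, by simp [hx.2.2]⟩

/-- The elementary inequality used at the end. -/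
theorem final_ineq {N a b z x κ C : ℝ} (hκ : 0 < κ) (hκ2 : κ ≤ 2) (ha : 0 ≤ a) (hb : 0 ≤ b)
    (hC : 0 < C) (hN0 : 0 ≤ N) (hN : N ≤ 1 / 4) (hNC : C * N ≤ 1 / 4)
    (hz : N ≤ 2 * z) (hzn : z ≤ |x| + b + a) (haz : a ≤ 1)
    (hx : |x - a ^ 2| ≤ C * N ^ (2 + κ)) :
    |x - a ^ 2| ≤ (C * 16 ^ (4 : ℝ)) * (a ^ (2 + κ) + b ^ (2 + κ)) := by
  have h1 : N ^ (2 + κ) ≤ N ^ 2 := by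
    rw [← Real.rpow_natCast]
    exact Real.rpow_le_rpow_of_exponent_ge_of_imp hN0 (by linarith) (by push_cast; linarith)
      (by intro _ h; linarith)
  have h2 : |x| ≤ a ^ 2 + N / 4 := by
    have : |x| ≤ |x - a ^ 2| + |a ^ 2| := by
      have := abs_add_le (x - a ^ 2) (a ^ 2)
      rwa [sub_add_cancel] at this
    rw [abs_of_nonneg (by positivity : 0 ≤ a ^ 2)] at this
    nlinarith
  have h3 : N ≤ 8 * (a + b) := by nlinarith
  have h4 : N ≤ 16 * max a b := by
    have := le_max_left a b
    have := le_max_right a b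
    linarith
  refine hx.trans ?_
  rw [mul_assoc]
  refine mul_le_mul_of_nonneg_left ?_ hC.le
  calc N ^ (2 + κ) ≤ (16 * max a b) ^ (2 + κ) := by gcongr
    _ = 16 ^ (2 + κ) * (max a b) ^ (2 + κ) := by
        rw [Real.mul_rpow (by norm_num) (by positivity)]
    _ ≤ 16 ^ (4 : ℝ) * (a ^ (2 + κ) + b ^ (2 + κ)) := by
        gcongr
        · norm_num
        · linarith
        · have := Real.rpow_nonneg ha (2 + κ)
          have := Real.rpow_nonneg hb (2 + κ)
          rcases max_choice a b with h | h <;> rw [h] <;> linarith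

theorem local_map (i0 : Fin n) (S : Set (Cn n)) {P2 P3 : Cn n → ℝ} (hP2 : P2 ∈ Q2 n)
    (hP3 : P3 ∈ Q3 n)
    {κ r C : ℝ} (hκ : 0 < κ) (hκ2 : κ ≤ 2) (hC : 0 ≤ C) (hr : 0 < r)
    (hS : ∀ u ∈ S, ‖u‖ < r → |-(u i0).re + P2 u + P3 u| ≤ C * ‖u‖ ^ (2 + κ))
    (hL : ∀ v : Cn n, v i0 = 0 →
      (P2 v + P2 (Complex.I • v)) / 2 = ∑ j ∈ Finset.univ.erase i0, ‖v j‖ ^ 2) :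
    ∃ (Φ : Cn n → Cn n) (δ C' : ℝ), 0 < δ ∧ 0 < C' ∧ Differentiable ℂ Φ ∧ Φ 0 = 0 ∧
      Set.InjOn Φ (Metric.ball 0 δ) ∧ ∀ u ∈ S, ‖u‖ < δ →
        |(Φ u i0).re - (∑ j ∈ Finset.univ.erase i0, ‖Φ u j‖ ^ 2)| ≤
          C' * (Real.sqrt (∑ j ∈ Finset.univ.erase i0, ‖Φ u j‖ ^ 2) ^ (2 + κ)
            + |(Φ u i0).im| ^ (2 + κ)) := by
  obtain ⟨F2, hF2, F3, hF3, G, hG, C', hC', hest⟩ := core i0 S hP2 hP3 hκ hκ2 hC hS hL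
  set K : Fin n → Cn n → ℂ := fun j => if j = i0 then F2 + F3 else G j with hK
  have hKreg : ∀ j, Differentiable ℂ (K j) ∧ HasStrictFDerivAt (K j) (0 : Cn n →L[ℂ] ℂ) 0 ∧
      K j 0 = 0 := by
    intro j
    by_cases h : j = i0
    · simp only [hK, h, if_true]
      have hx := H2_reg hF2
      have hy := H3_reg hF3
      exact ⟨hx.1.add hy.1, by simpa using hx.2.1.add hy.2.1, by simp [hx.2.2, hy.2.2]⟩
    · simp only [hK, h, if_false]
      exact H2_reg (hG j)
  set Φ : Cn n → Cn n := fun u => WithLp.toLp 2 (fun j => u j + K j u) with hΦ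
  have hΦa : ∀ u j, Φ u j = u j + K j u := fun u j => rfl
  have hd : Differentiable ℂ Φ := by
    rw [differentiable_euclidean]
    intro j
    exact ((co j).differentiable).add (hKreg j).1
  have hst : HasStrictFDerivAt Φ (ContinuousLinearMap.id ℂ (Cn n)) 0 := by
    rw [hasStrictFDerivAt_euclidean]
    intro j
    have := ((co j).hasStrictFDerivAt (x := 0)).add (hKreg j).2.1
    rw [add_zero] at this
    exact this
  have hlo := hst.isLittleO.def (show (0 : ℝ) < 1 / 2 by norm_num)
  rw [Metric.eventually_nhds_iff] at hlo
  obtain ⟨d, hd0, hdd⟩ := hlo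
  have hΦ0 : Φ 0 = 0 := by
    ext j
    rw [hΦa]
    simp [(hKreg j).2.2]
  set δ := min (min d r) (min (1 / 4) (1 / (4 * C'))) with hδ
  have hδ0 : 0 < δ := by positivity
  have hcl : ∀ x y : Cn n, ‖x‖ < δ → ‖y‖ < δ → ‖Φ x - Φ y - (x - y)‖ ≤ 1 / 2 * ‖x - y‖ := by
    intro x y hx hy
    have hb : δ ≤ d := (min_le_left _ _).trans (min_le_left _ _)
    have := @hdd (x, y) (by
      rw [Prod.dist_eq]
      simp only [Prod.fst_zero, Prod.snd_zero, dist_zero_right]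
      exact max_lt (hx.trans_le hb) (hy.trans_le hb))
    simpa using this
  refine ⟨Φ, δ, C' * 16 ^ (4 : ℝ), hδ0, by positivity, hd, hΦ0, ?_, ?_⟩
  · intro x hx y hy hxy
    have := hcl x y (by simpa using hx) (by simpa using hy)
    rw [hxy, sub_self, zero_sub, norm_neg] at this
    have h0 := norm_nonneg (x - y)
    exact sub_eq_zero.mp (norm_eq_zero.mp (by linarith))
  · intro u hu hud
    have hb1 : δ ≤ r := (min_le_left _ _).trans (min_le_right _ _)
    have hb2 : δ ≤ 1 / 4 := (min_le_right _ _).trans (min_le_left _ _)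
    have hb3 : δ ≤ 1 / (4 * C') := (min_le_right _ _).trans (min_le_right _ _)
    have hcu := hcl u 0 hud (by simpa using hδ0)
    rw [hΦ0, sub_zero, sub_zero] at hcu
    have he := hest u hu (hud.trans_le hb1) (by linarith)
    have hA0 : 0 ≤ ∑ j ∈ Finset.univ.erase i0, ‖Φ u j‖ ^ 2 := by positivity
    set A := ∑ j ∈ Finset.univ.erase i0, ‖Φ u j‖ ^ 2 with hA
    have hlow : ‖u‖ ≤ 2 * ‖Φ u‖ := by
      have : ‖u‖ ≤ ‖Φ u‖ + ‖Φ u - u‖ := by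
        simpa using norm_sub_le (Φ u) (Φ u - u)
      linarith
    have hup : ‖Φ u‖ ≤ 2 * ‖u‖ := by
      have : ‖Φ u‖ ≤ ‖u‖ + ‖Φ u - u‖ := by
        simpa using norm_add_le u (Φ u - u)
      linarith [norm_nonneg u]
    have hsq : ‖Φ u‖ ^ 2 = ‖Φ u i0‖ ^ 2 + A := by
      rw [EuclideanSpace.norm_sq_eq, hA, Finset.add_sum_erase _ (fun j => ‖Φ u j‖ ^ 2) (Finset.mem_univ i0)]
    have hss := Real.sq_sqrt hA0
    have hs0 := Real.sqrt_nonneg A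
    have hre : (u i0 + F2 u + F3 u) = Φ u i0 := by
      rw [hΦa]; simp [hK, add_assoc]
    have hA' : ∑ j ∈ Finset.univ.erase i0, ‖u j + G j u‖ ^ 2 = A := by
      rw [hA]
      apply Finset.sum_congr rfl
      intro j hj
      rw [hΦa]
      simp [hK, Finset.ne_of_mem_erase hj]
    rw [hre, hA', ← hss] at he
    have := final_ineq (N := ‖u‖) (a := Real.sqrt A) (b := |(Φ u i0).im|) (z := ‖Φ u‖)
      (x := (Φ u i0).re) hκ hκ2 hs0 (abs_nonneg _) hC' (norm_nonneg _) (by linarith) (by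
        have : ‖u‖ ≤ 1 / (4 * C') := by linarith
        calc C' * ‖u‖ ≤ C' * (1 / (4 * C')) := by gcongr
          _ = 1 / 4 := by field_simp) hlow (by
        have h1 : ‖Φ u‖ ≤ ‖Φ u i0‖ + Real.sqrt A := by
          apply le_of_sq_le_sq _ (by positivity)
          nlinarith [norm_nonneg (Φ u i0)]
        have h2 := Complex.norm_le_abs_re_add_abs_im (Φ u i0)
        linarith) (by
        apply Real.sqrt_le_one.mpr
        nlinarith [norm_nonneg (Φ u), norm_nonneg (Φ u i0)]) he
    rw [hss] at this
    exact this
theorem exists_coords {V : Type*} [AddCommGroup V] [Module ℂ V] [FiniteDimensional ℂ V]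
    (c : InnerProductSpace.Core ℂ V) (hdim : Module.finrank ℂ V = n) (i0 : Fin n) (e : V)
    (he : c.inner e e = 1) :
    ∃ Ψ : V ≃ₗ[ℂ] Cn n, (∀ x, Ψ x i0 = c.inner e x) ∧
      ∀ x, (c.inner x x).re = ∑ j, ‖Ψ x j‖ ^ 2 := by
  letI : NormedAddCommGroup V := c.toNormedAddCommGroup
  letI : InnerProductSpace ℂ V := InnerProductSpace.ofCore c.toCore
  have hin : ∀ x y : V, inner ℂ x y = c.inner x y := fun x y => rfl
  have hor : Orthonormal ℂ (({i0} : Set (Fin n)).domRestrict (fun _ : Fin n => e)) := by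
    rw [orthonormal_iff_ite]
    rintro ⟨i, hi⟩ ⟨j, hj⟩
    simp only [Set.mem_singleton_iff] at hi hj
    subst hi hj
    have h' : inner ℂ e e = (1 : ℂ) := he
    rw [if_pos rfl]
    exact h'
  obtain ⟨b, hb⟩ := Orthonormal.exists_orthonormalBasis_extension_of_card_eq
    (by simpa using hdim) hor
  refine ⟨b.repr.toLinearEquiv, fun x => ?_, fun x => ?_⟩
  · have h1 : b i0 = e := hb i0 rfl
    have := b.repr_apply_apply x i0
    rw [h1, hin] at this
    exact this
  · have h1 : ‖b.repr x‖ = ‖x‖ := b.repr.norm_map x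
    have h2 := EuclideanSpace.norm_sq_eq (b.repr x)
    have h3 : ‖x‖ ^ 2 = (c.inner x x).re := by
      rw [← hin]
      exact norm_sq_eq_re_inner (𝕜 := ℂ) x
    rw [← h3, ← h1, h2]
    rfl

theorem levi_coords (i0 : Fin n) (ℓ : Cn n →L[ℂ] ℂ) (e : Cn n) (he : ℓ e = 1)
    (D : Cn n →L[ℝ] Cn n →L[ℝ] ℝ)
    (hpos : ∀ X : Cn n, X ≠ 0 → ℓ X = 0 →
      0 < (D X X + D (Complex.I • X) (Complex.I • X)) / 4) :
    ∃ Ψ : Cn n ≃ₗ[ℂ] Cn n, (∀ x, Ψ x i0 = ℓ x) ∧ ∀ x, ℓ x = 0 →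
      (D x x + D (Complex.I • x) (Complex.I • x)) / 4 =
        ∑ j ∈ Finset.univ.erase i0, ‖Ψ x j‖ ^ 2 := by
  set M : Cn n → Cn n → ℝ := fun x y =>
    (D x y + D y x + D (Complex.I • x) (Complex.I • y) + D (Complex.I • y) (Complex.I • x)) / 8
    with hM
  have hII : ∀ x : Cn n, Complex.I • Complex.I • x = -x := by
    intro x; rw [smul_smul, Complex.I_mul_I, neg_one_smul]
  have hMsymm : ∀ x y, M x y = M y x := by intro x y; simp only [hM]; ring
  have hMadd : ∀ x y z, M (x + y) z = M x z + M y z := by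
    intro x y z; simp only [hM, smul_add, map_add, add_apply]; ring
  have hMI : ∀ x y, M (Complex.I • x) (Complex.I • y) = M x y := by
    intro x y; simp only [hM, hII, map_neg, neg_apply]; ring
  have hMsmul : ∀ (a : ℝ) x y, M (a • x) y = a * M x y := by
    intro a x y
    simp only [hM, smul_comm Complex.I a, map_smul, smul_apply, smul_eq_mul]; ring
  have hMI' : ∀ x y, M (Complex.I • x) y = - M x (Complex.I • y) := by
    intro x y
    have := hMI x (Complex.I • y)
    rw [hII] at this
    have h2 : M (Complex.I • x) (-y) = - M (Complex.I • x) y := by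
      rw [hMsymm, show -y = (-1 : ℝ) • y by simp, hMsmul, hMsymm]; ring
    linarith
  have hMsmulC : ∀ (r : ℂ) x y, M (r • x) y = r.re * M x y + r.im * M (Complex.I • x) y := by
    intro r x y
    have : r • x = r.re • x + r.im • (Complex.I • x) := by
      conv_lhs => rw [← Complex.re_add_im r]
      rw [add_smul, mul_smul]
      simp
    rw [this, hMadd, hMsmul, hMsmul]
  have hMx : ∀ x, M x x = (D x x + D (Complex.I • x) (Complex.I • x)) / 4 := by
    intro x; simp only [hM]; ring
  have hMIx : ∀ x, M (Complex.I • x) x = 0 := by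
    intro x
    have := hMI' x x
    rw [hMsymm x] at this
    linarith
  set π : Cn n →ₗ[ℂ] Cn n := LinearMap.id - (ℓ : Cn n →ₗ[ℂ] ℂ).smulRight e with hπ
  have hπa : ∀ x, π x = x - ℓ x • e := by intro x; simp [hπ]
  have hℓπ : ∀ x, ℓ (π x) = 0 := by intro x; simp [hπa, he]
  have hMnn : ∀ x, 0 ≤ M (π x) (π x) := by
    intro x
    by_cases h : π x = 0
    · rw [h, hMx]; simp
    · rw [hMx]; exact (hpos _ h (hℓπ x)).le
  let c : InnerProductSpace.Core ℂ (Cn n) :=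
    { inner := fun x y => ((M (π x) (π y) : ℝ) : ℂ) + Complex.I * (M (Complex.I • π x) (π y) : ℝ)
        + starRingEnd ℂ (ℓ x) * ℓ y
      conj_inner_symm := by
        intro x y
        simp only [map_add, map_mul, Complex.conj_ofReal, Complex.conj_I, Complex.conj_conj]
        rw [hMsymm (π y), hMI' (π y), hMsymm (π y)]
        push_cast
        ring
      re_inner_nonneg := by
        intro x
        rw [hMIx]
        simp
        have := hMnn x
        nlinarith [sq_nonneg (ℓ x).re, sq_nonneg (ℓ x).im]
      add_left := by
        intro x y z
        simp only [map_add, hMadd, smul_add]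
        push_cast
        ring
      smul_left := by
        intro x y r
        have e1 : M (Complex.I • r • π x) (π y) =
            r.re * M (Complex.I • π x) (π y) - r.im * M (π x) (π y) := by
          rw [smul_comm Complex.I r, hMsmulC, hII, show -(π x) = (-1 : ℝ) • π x by simp, hMsmul]
          ring
        rw [map_smul, map_smul, e1, hMsmulC, smul_eq_mul, map_mul]
        have : starRingEnd ℂ r = r.re - r.im * Complex.I := by
          apply Complex.ext <;> simp
        rw [this]
        push_cast
        ring_nf
        simp only [Complex.I_sq]
        ring
      definite := by
        intro x hx
        have hre := congrArg Complex.re hx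
        rw [hMIx] at hre
        simp at hre
        have h1 := hMnn x
        have h2 : (ℓ x).re = 0 ∧ (ℓ x).im = 0 := by
          constructor <;> nlinarith [sq_nonneg (ℓ x).re, sq_nonneg (ℓ x).im]
        have h3 : ℓ x = 0 := Complex.ext h2.1 h2.2
        by_contra hne
        have h4 : π x = x := by rw [hπa, h3]; simp
        have h5 := hpos x hne h3
        rw [← hMx] at h5
        rw [h4, h3] at hre
        simp at hre
        linarith }
  have hc : ∀ x y, c.inner x y = ((M (π x) (π y) : ℝ) : ℂ)
        + Complex.I * (M (Complex.I • π x) (π y) : ℝ) + starRingEnd ℂ (ℓ x) * ℓ y := fun x y => rfl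
  have hπe : π e = 0 := by rw [hπa, he]; simp
  have hM0 : ∀ y, M 0 y = 0 := by
    intro y
    have := hMsmul 0 0 y
    simpa using this
  have hce : ∀ x, c.inner e x = ℓ x := by
    intro x
    rw [hc, hπe, smul_zero, hM0, he]
    simp
  obtain ⟨Ψ, h1, h2⟩ := exists_coords (n := n) c (by simp) i0 e (by rw [hce, he])
  refine ⟨Ψ, fun x => by rw [h1, hce], fun x hx => ?_⟩
  have h3 := h2 x
  rw [← Finset.add_sum_erase _ (fun j => ‖Ψ x j‖ ^ 2) (Finset.mem_univ i0), h1, hce, hx, hc, hMIx,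
    hx, hπa, hx, zero_smul, sub_zero, hMx] at h3
  simpa using h3

theorem taylor_holder {E : Type*} [NormedAddCommGroup E] [NormedSpace ℝ E] {f : E → ℝ} {W : Set E}
    (hW : IsOpen W) {p : E} (hp : p ∈ W) (m : ℕ) (hf : ContDiffOn ℝ ((m + 1 : ℕ)) f W)
    {C ε : ℝ≥0} (hh : HolderOnWith C ε (iteratedFDeriv ℝ (m + 1) f) W) :
    ∃ r > 0, ∀ h : E, ‖h‖ < r → p + h ∈ W ∧
      |f (p + h) - ∑ k ∈ Finset.range (m + 2),
        ((k.factorial : ℝ)⁻¹ * iteratedFDeriv ℝ k f p (fun _ => h))|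
        ≤ C * ‖h‖ ^ ((m : ℝ) + 1 + ε) := by
  obtain ⟨r, hr, hball⟩ := Metric.isOpen_iff.mp hW p hp
  refine ⟨r, hr, fun h hhr => ?_⟩
  have hmem : ∀ t ∈ Set.Icc (0 : ℝ) 1, p + t • h ∈ W := by
    intro t ht
    apply hball
    simp only [Metric.mem_ball, dist_self_add_left, norm_smul, Real.norm_eq_abs, abs_of_nonneg ht.1]
    nlinarith [ht.2, norm_nonneg h]
  refine ⟨by simpa using hmem 1 (by simp), ?_⟩
  have hcd : ∀ t ∈ Set.Icc (0 : ℝ) 1, ContDiffAt ℝ ((m : WithTop ℕ∞) + 1) f (p + t • h) := by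
    intro t ht
    have := hf.contDiffAt (hW.mem_nhds (hmem t ht))
    exact_mod_cast this
  have hT := map_add_eq_sum_add_integral_iteratedFDeriv hcd
  set I1 : ℝ → ℝ := fun t => (1 - t) ^ m • iteratedFDeriv ℝ (m + 1) f (p + t • h) (fun _ => h)
    with hI1
  set c0 : ℝ := iteratedFDeriv ℝ (m + 1) f p (fun _ => h) with hc0
  have hint : ∫ t in (0:ℝ)..1, (1 - t) ^ m * c0 = ((m : ℝ) + 1)⁻¹ * c0 := by
    rw [intervalIntegral.integral_mul_const]
    congr 1
    rw [intervalIntegral.integral_comp_sub_left (fun t => t ^ m)]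
    simp
  have hcont : ContinuousOn I1 (Set.uIcc 0 1) := by
    rw [Set.uIcc_of_le zero_le_one]
    intro t ht
    have h_cont : ContinuousAt (iteratedFDeriv ℝ (m + 1) f) (p + t • h) :=
      ((hcd t ht).iteratedFDeriv_right (i := m + 1) (m := 0) (by simp)).continuousAt
    have h2 := (h_cont.comp (x := t) (f := fun t : ℝ => p + t • h)
      (by fun_prop)).continuousWithinAt (s := Set.Icc 0 1) |>.eval_const (fun _ => h)
    have h0 : ContinuousWithinAt (fun t : ℝ => (1 - t) ^ m) (Set.Icc 0 1) t :=
      Continuous.continuousWithinAt (by fun_prop)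
    exact h0.smul h2
  have hdiff : (∫ t in (0:ℝ)..1, I1 t) - ((m : ℝ) + 1)⁻¹ * c0 =
      ∫ t in (0:ℝ)..1, (I1 t - (1 - t) ^ m * c0) := by
    rw [← hint, intervalIntegral.integral_sub hcont.intervalIntegrable]
    apply Continuous.intervalIntegrable
    fun_prop
  have hbd : |∫ t in (0:ℝ)..1, (I1 t - (1 - t) ^ m * c0)| ≤ C * ‖h‖ ^ ((m : ℝ) + 1 + ε) := by
    have := intervalIntegral.norm_integral_le_of_norm_le_const (a := (0:ℝ)) (b := 1)
      (C := C * ‖h‖ ^ ((m : ℝ) + 1 + ε)) (f := fun t => I1 t - (1 - t) ^ m * c0) (by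
      intro t ht
      rw [Set.uIoc_of_le zero_le_one] at ht
      have ht' : t ∈ Set.Icc (0 : ℝ) 1 := ⟨ht.1.le, ht.2⟩
      have h1 : I1 t - (1 - t) ^ m * c0 = (1 - t) ^ m *
          ((iteratedFDeriv ℝ (m + 1) f (p + t • h) - iteratedFDeriv ℝ (m + 1) f p)
            (fun _ => h)) := by
        simp only [hI1, hc0, smul_eq_mul, sub_apply]; ring
      have h2 := hh.dist_le (hmem t ht') hp
      rw [dist_eq_norm, dist_self_add_left] at h2
      have h3 := (iteratedFDeriv ℝ (m + 1) f (p + t • h)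
        - iteratedFDeriv ℝ (m + 1) f p).le_opNorm (fun _ => h)
      simp only [Finset.prod_const, Finset.card_univ, Fintype.card_fin] at h3
      rw [h1, norm_mul]
      have h4 : ‖(1 - t) ^ m‖ ≤ 1 := by
        rw [norm_pow]
        apply pow_le_one₀ (norm_nonneg _)
        rw [Real.norm_eq_abs, abs_le]
        constructor <;> linarith [ht.1, ht.2]
      have h5 : ‖t • h‖ ≤ ‖h‖ := by
        rw [norm_smul, Real.norm_eq_abs, abs_of_nonneg ht.1.le]
        nlinarith [ht.2, norm_nonneg h]
      calc _ ≤ 1 * (C * ‖h‖ ^ (ε : ℝ) * ‖h‖ ^ (m + 1)) := by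
            gcongr
            refine h3.trans ?_
            gcongr
            refine h2.trans ?_
            gcongr
        _ = C * (‖h‖ ^ (m + 1) * ‖h‖ ^ (ε : ℝ)) := by ring
        _ ≤ _ := by
            gcongr
            rw [Real.rpow_add_of_nonneg (norm_nonneg _) (by positivity) (by positivity)]
            norm_cast)
    simpa using this
  have hfac : ((m.factorial : ℝ))⁻¹ ≤ 1 := by
    apply inv_le_one_of_one_le₀
    exact_mod_cast Nat.one_le_iff_ne_zero.mpr (Nat.factorial_ne_zero m)
  have hkey : f (p + h) - ∑ k ∈ Finset.range (m + 2),
        ((k.factorial : ℝ)⁻¹ * iteratedFDeriv ℝ k f p (fun _ => h)) =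
        (m.factorial : ℝ)⁻¹ * ∫ t in (0:ℝ)..1, (I1 t - (1 - t) ^ m * c0) := by
    rw [← hdiff, hT, Finset.sum_range_succ _ (m + 1), Nat.factorial_succ]
    simp only [smul_eq_mul]
    push_cast
    rw [mul_inv]
    ring
  rw [hkey, abs_mul, abs_of_nonneg (by positivity : (0 : ℝ) ≤ (m.factorial : ℝ)⁻¹)]
  calc _ ≤ 1 * (C * ‖h‖ ^ ((m : ℝ) + 1 + ε)) := by gcongr
    _ = _ := one_mul _

theorem real_decomp (n : ℕ) : ∃ (X : Fin n ⊕ Fin n → (Cn n →L[ℂ] ℂ)) (v : Fin n ⊕ Fin n → Cn n),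
    ∀ w : Cn n, w = ∑ a, (X a w).re • v a := by
  refine ⟨Sum.elim (fun j => EuclideanSpace.proj j)
      (fun j => (-Complex.I) • (EuclideanSpace.proj j : Cn n →L[ℂ] ℂ)),
    Sum.elim (fun j => EuclideanSpace.single j 1) (fun j => EuclideanSpace.single j Complex.I), ?_⟩
  intro w
  ext i
  rw [Fintype.sum_sum_type]
  simp only [Sum.elim_inl, Sum.elim_inr, PiLp.add_apply, WithLp.ofLp_sum, Finset.sum_apply,
    PiLp.smul_apply, PiLp.single_apply]
  simp

theorem Q2_multi (T : ContinuousMultilinearMap ℝ (fun _ : Fin 2 => Cn n) ℝ) :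
    (fun w => T (fun _ => w)) ∈ Q2 n := by
  obtain ⟨X, v, hw⟩ := real_decomp n
  have : (fun w => T (fun _ => w)) = ∑ r : Fin 2 → Fin n ⊕ Fin n,
      (T fun i => v (r i)) • fun w => (X (r 0) w).re * (X (r 1) w).re := by
    funext w
    have h1 : (fun _ : Fin 2 => w) = fun _ : Fin 2 => ∑ a, (X a w).re • v a := by
      funext i; exact hw w
    rw [h1, ContinuousMultilinearMap.map_sum, Finset.sum_apply]
    refine Finset.sum_congr rfl fun r _ => ?_
    rw [ContinuousMultilinearMap.map_smul_univ T (fun i => (X (r i) w).re) (fun i => v (r i))]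
    simp [Fin.prod_univ_two, mul_comm]
  rw [this]
  exact Submodule.sum_mem _ fun r _ => Submodule.smul_mem _ _ (Q2_mk _ _)

theorem Q3_multi (T : ContinuousMultilinearMap ℝ (fun _ : Fin 3 => Cn n) ℝ) :
    (fun w => T (fun _ => w)) ∈ Q3 n := by
  obtain ⟨X, v, hw⟩ := real_decomp n
  have : (fun w => T (fun _ => w)) = ∑ r : Fin 3 → Fin n ⊕ Fin n,
      (T fun i => v (r i)) • fun w => (X (r 0) w).re * (X (r 1) w).re * (X (r 2) w).re := by
    funext w
    have h1 : (fun _ : Fin 3 => w) = fun _ : Fin 3 => ∑ a, (X a w).re • v a := by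
      funext i; exact hw w
    rw [h1, ContinuousMultilinearMap.map_sum, Finset.sum_apply]
    refine Finset.sum_congr rfl fun r _ => ?_
    rw [ContinuousMultilinearMap.map_smul_univ T (fun i => (X (r i) w).re) (fun i => v (r i))]
    simp [Fin.prod_univ_three, mul_comm]
  rw [this]
  exact Submodule.sum_mem _ fun r _ => Submodule.smul_mem _ _ (Q3_mk _ _ _)

/-- the complex linear form with real part `-A`. -/
theorem exists_clin (A : Cn n →L[ℝ] ℝ) : ∃ ℓ : Cn n →L[ℂ] ℂ,
    ∀ h, ℓ h = -((A h : ℂ) - Complex.I * (A (Complex.I • h) : ℝ)) := by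
  have hII : ∀ x : Cn n, Complex.I • Complex.I • x = -x := by
    intro x; rw [smul_smul, Complex.I_mul_I, neg_one_smul]
  let l : Cn n →ₗ[ℂ] ℂ :=
    { toFun := fun h => -((A h : ℂ) - Complex.I * (A (Complex.I • h) : ℝ))
      map_add' := by
        intro x y
        simp only [smul_add, map_add]
        push_cast
        ring
      map_smul' := by
        intro r x
        have e0 : ∀ (r : ℂ) (x : Cn n), A (r • x) = r.re * A x + r.im * A (Complex.I • x) := by
          intro r x
          have : r • x = r.re • x + r.im • (Complex.I • x) := by
            conv_lhs => rw [← Complex.re_add_im r]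
            rw [add_smul, mul_smul]
            simp
          rw [this, map_add, map_smul, map_smul]
          simp
        rw [smul_comm Complex.I r x, e0, e0 r (Complex.I • x), hII, map_neg]
        simp only [RingHom.id_apply, smul_eq_mul]
        conv_rhs => rw [← Complex.re_add_im r]
        push_cast
        ring_nf
        simp only [Complex.I_sq]
        ring }
  exact ⟨LinearMap.toContinuousLinearMap l, fun h => rfl⟩

theorem frontier_zero {Ω W : Set (Cn n)} (hopen : IsOpen Ω) (hW : IsOpen W) {ρ : Cn n → ℝ}
    (hρ : ContinuousOn ρ W) (hΩ : Ω ∩ W = {z ∈ W | ρ z < 0}) {z : Cn n} (hz : z ∈ frontier Ω)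
    (hzW : z ∈ W) : ρ z = 0 := by
  have hc : ContinuousAt ρ z := hρ.continuousAt (hW.mem_nhds hzW)
  apply le_antisymm
  · by_contra hlt
    push Not at hlt
    have h1 : ∀ᶠ w in nhds z, 0 < ρ w := hc.eventually (lt_mem_nhds hlt)
    have h2 := h1.and (hW.mem_nhds hzW)
    obtain ⟨w, hw, hwΩ⟩ := mem_closure_iff_nhds.mp hz.1 _ h2
    have : w ∈ Ω ∩ W := ⟨hwΩ, hw.2⟩
    rw [hΩ] at this
    have h3 : ρ w < 0 := this.2
    have h4 : 0 < ρ w := hw.1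
    linarith
  · by_contra hlt
    push Not at hlt
    have : z ∈ Ω ∩ W := by rw [hΩ]; exact ⟨hzW, hlt⟩
    rw [hopen.frontier_eq] at hz
    exact hz.2 this.1

theorem taylor_sum (k : ℕ) (hk : k = 0 ∨ k = 1) (ρ : Cn n → ℝ) (p h : Cn n) (h0 : ρ p = 0) :
    ∑ j ∈ Finset.range (k + 1 + 2),
        ((j.factorial : ℝ)⁻¹ * iteratedFDeriv ℝ j ρ p (fun _ => h)) =
      fderiv ℝ ρ p h + 2⁻¹ * iteratedFDeriv ℝ 2 ρ p (fun _ => h)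
        + (if k = 1 then 6⁻¹ else 0) * iteratedFDeriv ℝ 3 ρ p (fun _ => h) := by
  rcases hk with rfl | rfl
  · simp [Finset.sum_range_succ, h0, iteratedFDeriv_one_apply]
  · simp [Finset.sum_range_succ, h0, iteratedFDeriv_one_apply, Nat.factorial]

/-- Boundary approximation by spheres. -/
theorem boundary_sphere_approximation (n : ℕ) (hn : 0 < n) (ε : ℝ)
    (hε : ε ∈ Set.Ioc (0 : ℝ) 1) (k : ℕ) (hk : k = 0 ∨ k = 1)
    (Ω : Set (Cn n)) (hopen : IsOpen Ω) (hconn : IsConnected Ω) (p : Cn n) (hp : IsStrictPscPtHolder Ω p (k + 2) ε) :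
    ∃ (U : Set (Cn n)) (Φ : Cn n → Cn n) (C : ℝ), IsOpen U ∧ p ∈ U ∧ 0 < C ∧
      Set.InjOn Φ U ∧ DifferentiableOn ℂ Φ U ∧ Φ p = 0 ∧
      ∀ ζ ∈ Φ '' (frontier Ω ∩ U),
        |(ζ (⟨0, hn⟩ : Fin n)).re - (∑ j ∈ Finset.univ.erase (⟨0, hn⟩ : Fin n), ‖ζ j‖ ^ 2)| ≤
          C * (Real.sqrt (∑ j ∈ Finset.univ.erase (⟨0, hn⟩ : Fin n), ‖ζ j‖ ^ 2) ^ (2 + ((k : ℝ) + ε))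
            + |(ζ (⟨0, hn⟩ : Fin n)).im| ^ (2 + ((k : ℝ) + ε))) := by
  obtain ⟨hpf, W, hW, hpW, ρ, hcd, ⟨C, hH⟩, hΩ, hgrad, hlevi⟩ := hp
  set i0 : Fin n := ⟨0, hn⟩
  have hz : ∀ z ∈ frontier Ω, z ∈ W → ρ z = 0 := fun z h1 h2 =>
    frontier_zero hopen hW hcd.continuousOn hΩ h1 h2
  have hρp : ρ p = 0 := hz p hpf hpW
  have hcdp : ContDiffAt ℝ 2 ρ p := by
    refine (hcd.contDiffAt (hW.mem_nhds hpW)).of_le ?_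
    exact_mod_cast Nat.le_add_left 2 k
  have hdd : DifferentiableAt ℝ (fderiv ℝ ρ) p :=
    (hcdp.fderiv_right (m := 1) (by norm_num)).differentiableAt (by norm_num)
  set D : Cn n →L[ℝ] Cn n →L[ℝ] ℝ := fderiv ℝ (fderiv ℝ ρ) p with hD
  have hDX : ∀ X Y, fderiv ℝ (fun w => fderiv ℝ ρ w X) p Y = D Y X := by
    intro X Y
    have := hdd.hasFDerivAt.clm_apply (hasFDerivAt_const X p)
    rw [this.fderiv]
    simp [hD]
  have hlev : ∀ X, leviForm ρ p X = (D X X + D (Complex.I • X) (Complex.I • X)) / 4 := by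
    intro X; rw [leviForm, hDX, hDX]
  obtain ⟨ℓ, hℓ⟩ := exists_clin (fderiv ℝ ρ p)
  have hcl : ∀ X, cderiv ρ p X = -ℓ X / 2 := by
    intro X; rw [hℓ, cderiv]; ring
  have hre : ∀ h, fderiv ℝ ρ p h = -(ℓ h).re := by
    intro h; rw [hℓ]; simp
  obtain ⟨x0, hx0⟩ : ∃ x, ℓ x ≠ 0 := by
    by_contra hcon
    push Not at hcon
    apply hgrad p ⟨hpf, hpW⟩
    ext x
    rw [hre, hcon]; simp
  obtain ⟨Ψ, hΨ0, hΨ⟩ := levi_coords i0 ℓ ((ℓ x0)⁻¹ • x0) (by simp [hx0]) D (by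
    intro X hX hX0
    rw [← hlev]
    exact hlevi p ⟨hpf, hpW⟩ X hX (by rw [hcl, hX0]; simp))
  set Ψc : Cn n ≃L[ℂ] Cn n := Ψ.toContinuousLinearEquiv with hΨc
  have hΨe : ∀ x, Ψc x = Ψ x := fun x => rfl
  set A : Cn n →L[ℂ] Cn n := (Ψc.symm : Cn n →L[ℂ] Cn n) with hA
  have hAΨ : ∀ x, A (Ψc x) = x := fun x => Ψc.symm_apply_apply x
  have hΨA : ∀ u, Ψc (A u) = u := fun x => Ψc.apply_symm_apply x
  obtain ⟨r, hr, hT⟩ := taylor_holder hW hpW (k + 1) hcd hH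
  have hP2 : (fun u => 2⁻¹ * iteratedFDeriv ℝ 2 ρ p (fun _ => A u)) ∈ Q2 n :=
    Submodule.smul_mem _ (2⁻¹ : ℝ) (Q2_comp (Q2_multi (iteratedFDeriv ℝ 2 ρ p)) A)
  have hP3 : (fun u => (if k = 1 then 6⁻¹ else 0) * iteratedFDeriv ℝ 3 ρ p (fun _ => A u)) ∈ Q3 n :=
    Submodule.smul_mem _ (if k = 1 then 6⁻¹ else 0 : ℝ)
      (Q3_comp (Q3_multi (iteratedFDeriv ℝ 3 ρ p)) A)
  have hk0 : (0 : ℝ) ≤ k := Nat.cast_nonneg k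
  have hk1 : (k : ℝ) ≤ 1 := by rcases hk with rfl | rfl <;> simp
  have hA1 : (0 : ℝ) < ‖A‖ + 1 := by positivity
  obtain ⟨Φ, δ, C', hδ, hC', hΦd, hΦ0, hΦi, hΦ⟩ := local_map i0 {u | p + A u ∈ frontier Ω} hP2 hP3
    (κ := (k : ℝ) + ε) (r := r / (‖A‖ + 1)) (C := C * (‖A‖ + 1) ^ (2 + ((k : ℝ) + ε)))
    (by linarith [hε.1]) (by linarith [hε.2]) (by positivity) (by positivity)
    (by
      intro u hu hur
      rw [lt_div_iff₀ hA1] at hur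
      have hAu : ‖A u‖ ≤ (‖A‖ + 1) * ‖u‖ := by
        refine (A.le_opNorm u).trans ?_
        gcongr
        linarith
      obtain ⟨h1, h2⟩ := hT (A u) (by linarith)
      rw [hz _ hu h1, taylor_sum k hk ρ p _ hρp, zero_sub, abs_neg, hre, ← hΨ0, ← hΨe, hΨA] at h2
      refine h2.trans ?_
      have e1 : ((k + 1 : ℕ) : ℝ) + 1 + (ε.toNNReal : ℝ) = 2 + ((k : ℝ) + ε) := by
        rw [Real.coe_toNNReal _ hε.1.le]; push_cast; ring
      rw [e1, mul_assoc, ← Real.mul_rpow hA1.le (norm_nonneg _)]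
      have : 0 ≤ 2 + ((k : ℝ) + ε) := by linarith [hε.1]
      gcongr)
    (by
      intro v hv
      have h1 : ℓ (A v) = 0 := by rw [← hΨ0, ← hΨe, hΨA, hv]
      have h2 := hΨ _ h1
      simp only [← hΨe, hΨA] at h2
      rw [← h2]
      simp only [iteratedFDeriv_two_apply, map_smul]
      rw [← hD]
      ring)
  have hmapdiff : Differentiable ℂ (fun z : Cn n => Ψc (z - p)) :=
    Ψc.differentiable.comp (differentiable_id.sub_const p)
  refine ⟨{z | ‖Ψc (z - p)‖ < δ}, fun z => Φ (Ψc (z - p)), C',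
    isOpen_lt hmapdiff.continuous.norm continuous_const, by simpa using hδ, hC', ?_,
    (hΦd.comp hmapdiff).differentiableOn, by simpa using hΦ0, ?_⟩
  · intro x hx y hy hxy
    have := hΦi (by simpa using hx) (by simpa using hy) hxy
    have := Ψc.injective this
    simpa using this
  · rintro _ ⟨z, ⟨hzf, hzU⟩, rfl⟩
    exact hΦ (Ψc (z - p)) (by simpa [hAΨ] using hzf) hzU

end
end

section
/- Let Ω be a bounded domain in ℂⁿ. Then for every z ∈ Ω and every X ∈ ℂⁿ, σ_Ω(z)·κ_Ω(z;X) ≤ γ_Ω(z;X) ≤ κ_Ω(z;X); in particular, if X ≠ 0 then σ_Ω(z) ≤ γ_Ω(z;X)/κ_Ω(z;X) ≤ 1. -/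
open Metric MeasureTheory Set
open scoped NNReal ENNReal

noncomputable section

variable {n : ℕ}

section AuxAll

open Filter Topology

section Osgood

variable {E F : Type} [NormedAddCommGroup E] [NormedSpace ℂ E] [NormedAddCommGroup F]
  [NormedSpace ℂ F]

lemma aux_line_differentiable (x v : E) : Differentiable ℂ (fun ζ : ℂ => x + ζ • v) := by
  fun_prop

lemma aux_line_hasDerivAt (x v : E) (t : ℂ) : HasDerivAt (fun ζ : ℂ => x + ζ • v) v t := by
  simpa using ((hasDerivAt_id t).smul_const v).const_add x

lemma aux_line_deriv {f : E → F} {x v : E} {t : ℂ} (hf : DifferentiableAt ℂ f (x + t • v)) :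
    HasDerivAt (fun ζ : ℂ => f (x + ζ • v)) (fderiv ℂ f (x + t • v) v) t :=
  hf.hasFDerivAt.comp_hasDerivAt t (aux_line_hasDerivAt x v t)

lemma aux_cauchy {f : E → F} {U : Set E} (hU : IsOpen U) (hf : DifferentiableOn ℂ f U)
    {x : E} {R C : ℝ} (hR : 0 < R) (hC : 0 ≤ C) (hxU : closedBall x R ⊆ U)
    (hb : ∀ y ∈ closedBall x R, ‖f y‖ ≤ C) : ‖fderiv ℂ f x‖ ≤ C / R := by
  refine ContinuousLinearMap.opNorm_le_of_unit_norm (by positivity) ?_ |>.trans le_rfl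
  intro v hv
  have hmem : ∀ ζ ∈ closedBall (0 : ℂ) R, x + ζ • v ∈ closedBall x R := by
    intro ζ hζ
    simpa [mem_closedBall, dist_eq_norm, norm_smul, hv] using hζ
  have h0 : deriv (fun ζ : ℂ => f (x + ζ • v)) 0 = fderiv ℂ f x v := by
    have := aux_line_deriv (f := f) (x := x) (v := v) (t := 0)
      (by simpa using hf.differentiableAt (hU.mem_nhds (hxU (mem_closedBall_self hR.le))))
    simpa using this.deriv
  rw [← h0]
  refine Complex.norm_deriv_le_of_forall_mem_sphere_norm_le hR ?_ ?_
  · refine DifferentiableOn.diffContOnCl_ball (U := closedBall 0 R) ?_ le_rfl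
    intro ζ hζ
    exact (aux_line_deriv (hf.differentiableAt
      (hU.mem_nhds (hxU (hmem ζ hζ))))).differentiableAt.differentiableWithinAt
  · intro ζ hζ
    exact hb _ (hmem ζ (sphere_subset_closedBall hζ))

/-- local bound data -/
lemma aux_local {f : E → F} {U : Set E} (hU : IsOpen U) (hf : DifferentiableOn ℂ f U)
    {x : E} (hx : x ∈ U) : ∃ R C : ℝ, 0 < R ∧ 0 ≤ C ∧ ball x (4 * R) ⊆ U ∧
      ∀ y ∈ ball x (3 * R), ‖fderiv ℂ f y‖ ≤ C := by
  have hc : ContinuousAt f x := (hf.differentiableAt (hU.mem_nhds hx)).continuousAt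
  have h1 : ∀ᶠ y in 𝓝 x, ‖f y‖ < ‖f x‖ + 1 := hc.norm.eventually_lt_const (by linarith)
  obtain ⟨r, hr, hrU⟩ := Metric.eventually_nhds_iff_ball.1 (h1.and (hU.mem_nhds hx))
  refine ⟨r / 4, (‖f x‖ + 1) / (r / 8), by positivity, by positivity, ?_, ?_⟩
  · intro y hy
    exact (hrU y (by simpa [mul_div_cancel₀] using hy)).2
  · intro y hy
    have hsub : closedBall y (r / 8) ⊆ ball x r := by
      intro w hw
      rw [mem_ball] at *
      rw [mem_closedBall] at hw
      linarith [dist_triangle w y x]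
    exact aux_cauchy hU hf (by positivity) (by positivity) (fun w hw => (hrU w (hsub hw)).2)
      (fun w hw => (hrU w (hsub hw)).1.le)

lemma aux_fderiv_continuousAt {f : E → F} {U : Set E} (hU : IsOpen U)
    (hf : DifferentiableOn ℂ f U) {x : E} (hx : x ∈ U) : ContinuousAt (fderiv ℂ f) x := by
  obtain ⟨R, C, hR, hC, hRU, hb⟩ := aux_local hU hf hx
  have hlip : ∀ a ∈ ball x (3 * R), ∀ b ∈ ball x (3 * R), ‖f a - f b‖ ≤ C * ‖a - b‖ := by
    intro a ha b hb'
    refine (convex_ball x (3 * R)).norm_image_sub_le_of_norm_fderiv_le (𝕜 := ℂ) ?_ hb hb' ha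
    intro y hy
    exact hf.differentiableAt (hU.mem_nhds (hRU (ball_subset_ball (by linarith) hy)))
  have key : ∀ y ∈ ball x R, ‖fderiv ℂ f y - fderiv ℂ f x‖ ≤ (C / R) * ‖y - x‖ := by
    intro y hy
    have hyn : ‖y - x‖ < R := by simpa [dist_eq_norm] using hy
    have hin : ∀ w ∈ ball x (2 * R), w + (y - x) ∈ ball x (3 * R) := by
      intro w hw
      rw [mem_ball, dist_eq_norm] at *
      calc ‖w + (y - x) - x‖ = ‖(w - x) + (y - x)‖ := by congr 1; abel
        _ ≤ ‖w - x‖ + ‖y - x‖ := norm_add_le _ _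
        _ < 3 * R := by linarith
    have hdat : ∀ w ∈ ball x (3 * R), DifferentiableAt ℂ f w := fun w hw =>
      hf.differentiableAt (hU.mem_nhds (hRU (ball_subset_ball (by linarith) hw)))
    have hd1 : ∀ w ∈ ball x (2 * R), HasFDerivAt (fun w => f (w + (y - x)) - f w)
        (fderiv ℂ f (w + (y - x)) - fderiv ℂ f w) w := by
      intro w hw
      have h1 := (hdat _ (hin w hw)).hasFDerivAt
      have h2 : HasFDerivAt (fun w => f (w + (y - x))) (fderiv ℂ f (w + (y - x))) w := by
        simpa [Function.comp_def] using h1.comp w ((hasFDerivAt_id w).add_const (y - x))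
      exact h2.sub (hdat w (ball_subset_ball (by linarith) hw)).hasFDerivAt
    have := aux_cauchy (f := fun w => f (w + (y - x)) - f w) (U := ball x (2 * R)) isOpen_ball
      (fun w hw => (hd1 w hw).differentiableAt.differentiableWithinAt) (x := x) (R := R)
      (C := C * ‖y - x‖) hR (by positivity) (closedBall_subset_ball (by linarith)) (by
        intro w hw
        have hw2 : w ∈ ball x (2 * R) := closedBall_subset_ball (by linarith) hw
        have := hlip _ (hin w hw2) w (ball_subset_ball (by linarith) hw2)
        simpa using this)
    rw [(hd1 x (mem_ball_self (by linarith))).fderiv] at this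
    simp only [add_sub_cancel] at this
    calc _ ≤ _ := this
      _ = _ := by ring
  rw [ContinuousAt, tendsto_iff_norm_sub_tendsto_zero]
  have hlim : Tendsto (fun y => (C / R) * ‖y - x‖) (𝓝 x) (𝓝 0) := by
    have : ContinuousAt (fun y => (C / R) * ‖y - x‖) x := by fun_prop
    simpa [ContinuousAt] using this
  refine squeeze_zero' (Eventually.of_forall fun _ => norm_nonneg _) ?_ hlim
  filter_upwards [ball_mem_nhds x hR] with y hy using key y hy

lemma aux_strict {f : E → F} {U : Set E} (hU : IsOpen U)
    (hf : DifferentiableOn ℂ f U) {x : E} (hx : x ∈ U) : HasStrictFDerivAt f (fderiv ℂ f x) x :=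
  hasStrictFDerivAt_of_hasFDerivAt_of_continuousAt
    (by filter_upwards [hU.mem_nhds hx] with y hy using
          (hf.differentiableAt (hU.mem_nhds hy)).hasFDerivAt)
    (aux_fderiv_continuousAt hU hf hx)

lemma aux_contDiffAt {f : E → F} {U : Set E} (hU : IsOpen U)
    (hf : DifferentiableOn ℂ f U) {x : E} (hx : x ∈ U) : ContDiffAt ℂ 1 f x := by
  rw [contDiffAt_one_iff]
  exact ⟨fderiv ℂ f, U, hU.mem_nhds hx,
    fun y hy => (aux_fderiv_continuousAt hU hf hy).continuousWithinAt,
    fun y hy => (hf.differentiableAt (hU.mem_nhds hy)).hasFDerivAt⟩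

lemma aux_dir [CompleteSpace F] {f : E → F} {U : Set E} (hU : IsOpen U)
    (hf : DifferentiableOn ℂ f U) (v : E) : DifferentiableOn ℂ (fun x => fderiv ℂ f x v) U := by
  intro x₀ hx₀
  apply DifferentiableAt.differentiableWithinAt
  obtain ⟨R, C, hR, hC, hRU, hb⟩ := aux_local hU hf hx₀
  obtain ⟨ρ, hρ, hρv⟩ : ∃ ρ : ℝ, 0 < ρ ∧ ρ * ‖v‖ < R := by
    refine ⟨R / (‖v‖ + 1), by positivity, ?_⟩
    rw [div_mul_eq_mul_div, div_lt_iff₀ (by positivity)]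
    nlinarith
  have hin : ∀ x ∈ ball x₀ R, ∀ ζ ∈ closedBall (0 : ℂ) ρ, x + ζ • v ∈ ball x₀ (3 * R) := by
    intro x hx ζ hζ
    rw [mem_ball, dist_eq_norm] at *
    rw [mem_closedBall, dist_zero_right] at hζ
    have : ‖ζ • v‖ ≤ ρ * ‖v‖ := by rw [norm_smul]; gcongr
    calc ‖x + ζ • v - x₀‖ = ‖(x - x₀) + ζ • v‖ := by congr 1; abel
      _ ≤ ‖x - x₀‖ + ‖ζ • v‖ := norm_add_le _ _
      _ < 3 * R := by linarith
  have hinU : ∀ x ∈ ball x₀ R, ∀ ζ ∈ closedBall (0 : ℂ) ρ, x + ζ • v ∈ U := fun x hx ζ hζ =>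
    hRU (ball_subset_ball (by linarith) (hin x hx ζ hζ))
  have hdat : ∀ y ∈ U, DifferentiableAt ℂ f y := fun w hw => hf.differentiableAt (hU.mem_nhds hw)
  have hcirc : ∀ θ : ℝ, circleMap 0 ρ θ ∈ closedBall (0 : ℂ) ρ := fun θ =>
    circleMap_mem_closedBall 0 hρ.le θ
  -- the kernel
  let κ : ℝ → ℂ := fun θ => deriv (circleMap 0 ρ) θ * ((circleMap 0 ρ θ - 0) ^ 2)⁻¹
  have hκ : Continuous κ := by
    have h1 : Continuous (fun θ => deriv (circleMap 0 ρ) θ) := by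
      simp only [deriv_circleMap]
      fun_prop
    refine h1.mul (Continuous.inv₀ (by fun_prop) ?_)
    intro θ
    simp [hρ.ne']
  have hcauchy : ∀ x ∈ ball x₀ R, fderiv ℂ f x v =
      (2 * Real.pi * Complex.I : ℂ)⁻¹ • ∫ θ in Ioc 0 (2 * Real.pi),
        κ θ • f (x + circleMap 0 ρ θ • v) := by
    intro x hx
    have h1 := Complex.two_pi_I_inv_smul_circleIntegral_sub_sq_inv_smul_of_differentiable
      (U := (fun ζ : ℂ => x + ζ • v) ⁻¹' U) (c := 0) (w₀ := 0) (R := ρ)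
      (f := fun ζ : ℂ => f (x + ζ • v)) (hU.preimage (by fun_prop)) (fun ζ hζ => hinU x hx ζ hζ)
      (fun ζ hζ => (aux_line_deriv (hdat _ hζ)).differentiableAt.differentiableWithinAt)
      (mem_ball_self hρ)
    have h2 := (aux_line_deriv (f := f) (x := x) (v := v) (t := 0)
      (hdat _ (hinU x hx 0 (mem_closedBall_self hρ.le)))).deriv
    simp only [zero_smul, add_zero] at h2
    rw [← h2, ← h1, circleIntegral, intervalIntegral.integral_of_le (by positivity)]
    simp only [smul_smul, κ]
  have hcont : ∀ x ∈ ball x₀ R, Continuous (fun θ => κ θ • f (x + circleMap 0 ρ θ • v)) := by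
    intro x hx
    refine hκ.smul ?_
    rw [continuous_iff_continuousAt]
    intro θ
    exact ContinuousAt.comp (f := fun θ : ℝ => x + circleMap 0 ρ θ • v)
      (hdat _ (hinU x hx _ (hcirc θ))).continuousAt (by fun_prop)
  have hcont' : Continuous (fun θ => κ θ • fderiv ℂ f (x₀ + circleMap 0 ρ θ • v)) := by
    refine hκ.smul ?_
    rw [continuous_iff_continuousAt]
    intro θ
    exact ContinuousAt.comp (f := fun θ : ℝ => x₀ + circleMap 0 ρ θ • v)
      (aux_fderiv_continuousAt hU hf (hinU x₀ (mem_ball_self hR) _ (hcirc θ))) (by fun_prop)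
  have hint : HasFDerivAt (fun x => ∫ θ in Ioc 0 (2 * Real.pi),
      κ θ • f (x + circleMap 0 ρ θ • v))
      (∫ θ in Ioc 0 (2 * Real.pi), κ θ • fderiv ℂ f (x₀ + circleMap 0 ρ θ • v)) x₀ := by
    refine hasFDerivAt_integral_of_dominated_of_fderiv_le (𝕜 := ℂ)
      (F' := fun x θ => κ θ • fderiv ℂ f (x + circleMap 0 ρ θ • v))
      (bound := fun θ => ‖κ θ‖ * C) (ball_mem_nhds x₀ hR) ?_ ?_ ?_ ?_ ?_ ?_
    · filter_upwards [ball_mem_nhds x₀ hR] with x hx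
      exact (hcont x hx).aestronglyMeasurable
    · exact (hcont x₀ (mem_ball_self hR)).integrableOn_Ioc
    · exact hcont'.aestronglyMeasurable
    · refine Eventually.of_forall fun θ x hx => ?_
      rw [norm_smul]
      gcongr
      exact hb _ (hin x hx _ (hcirc θ))
    · exact (hκ.norm.mul continuous_const).integrableOn_Ioc
    · refine Eventually.of_forall fun θ x hx => ?_
      have h1 := (hdat _ (hinU x hx _ (hcirc θ))).hasFDerivAt
      have h2 : HasFDerivAt (fun w => f (w + circleMap 0 ρ θ • v))
          (fderiv ℂ f (x + circleMap 0 ρ θ • v)) x := by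
        simpa [Function.comp_def] using h1.comp x ((hasFDerivAt_id x).add_const (circleMap 0 ρ θ • v))
      exact h2.const_smul (κ θ)
  refine (hint.differentiableAt.const_smul ((2 * Real.pi * Complex.I : ℂ)⁻¹)).congr_of_eventuallyEq ?_
  filter_upwards [ball_mem_nhds x₀ hR] with x hx using hcauchy x hx



lemma aux_const {f : E → F} {x : E} {r : ℝ} (hd : ∀ y ∈ ball x r, DifferentiableAt ℂ f y)
    (h0 : ∀ y ∈ ball x r, fderiv ℂ f y = 0) {y : E} (hy : y ∈ ball x r) : f y = f x := by
  have hr : 0 < r := pos_of_mem_ball hy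
  have := (convex_ball x r).norm_image_sub_le_of_norm_fderiv_le (𝕜 := ℂ) (C := 0) hd
    (fun y hy => by simp [h0 y hy]) (mem_ball_self hr) hy
  simpa [sub_eq_zero] using this

lemma aux_hurwitz {g : ℂ → ℂ} {c : ℂ} {r ε : ℝ} (hr : 0 < r)
    (hg : DifferentiableOn ℂ g (closedBall c r)) (hs : ∀ t ∈ sphere c r, ε ≤ ‖g t‖)
    (hc : ‖g c‖ < ε) : ∃ t ∈ closedBall c r, g t = 0 := by
  by_contra! hne
  have hε : 0 < ε := (norm_nonneg _).trans_lt hc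
  have hd : DiffContOnCl ℂ (fun t => (g t)⁻¹) (ball c r) :=
    DifferentiableOn.diffContOnCl_ball (U := closedBall c r) (hg.inv hne) le_rfl
  have := Complex.norm_le_of_forall_mem_frontier_norm_le (C := ε⁻¹) isBounded_ball hd (by
    intro t ht
    rw [frontier_ball c hr.ne'] at ht
    rw [norm_inv]
    exact inv_anti₀ hε (hs t ht)) (subset_closure (mem_ball_self hr))
  rw [norm_inv] at this
  have h2 := (inv_le_inv₀ (norm_pos_iff.2 (hne c (mem_closedBall_self hr.le))) hε).1 this
  linarith

lemma aux_one {f : ℂ → ℂ} {U : Set ℂ} (hU : IsOpen U) (hf : DifferentiableOn ℂ f U)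
    (hinj : InjOn f U) {z : ℂ} (hz : z ∈ U) : deriv f z ≠ 0 := by
  intro h0
  have hdat : ∀ y ∈ U, DifferentiableAt ℂ f y := fun w hw => hf.differentiableAt (hU.mem_nhds hw)
  obtain ⟨r, hr, hrU⟩ := Metric.nhds_basis_closedBall.mem_iff.1 (hU.mem_nhds hz)
  obtain ⟨m, hm, hmin⟩ : ∃ m : ℝ, 0 < m ∧ ∀ t ∈ sphere z r, m ≤ ‖f t - f z‖ := by
    have hcont : ContinuousOn (fun t => ‖f t - f z‖) (sphere z r) :=
      ((hf.continuousOn.mono (sphere_subset_closedBall.trans hrU)).sub continuousOn_const).norm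
    obtain ⟨t₀, ht₀, hmin⟩ := (isCompact_sphere z r).exists_isMinOn
      (NormedSpace.sphere_nonempty.2 hr.le) hcont
    refine ⟨‖f t₀ - f z‖, ?_, fun t ht => hmin ht⟩
    rw [norm_pos_iff, sub_ne_zero]
    intro he
    have := hinj (hrU (sphere_subset_closedBall ht₀)) hz he
    rw [this] at ht₀
    simp at ht₀
    exact hr.ne ht₀
  set ε : ℝ := (m / 2) / (2 * r) with hε
  have hεpos : 0 < ε := by positivity
  have e1 : ∀ᶠ s in 𝓝 z, ‖f s - f z‖ < m / 2 := by
    have : ContinuousAt (fun s => ‖f s - f z‖) z := ((hdat z hz).continuousAt.sub continuousAt_const).norm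
    exact this.eventually_lt_const (by simpa using hm)
  have e2 : ∀ᶠ s in 𝓝 z, ‖dslope f z s‖ < ε := by
    have : ContinuousAt (fun s => ‖dslope f z s‖) z := (continuousAt_dslope_same.2 (hdat z hz)).norm
    exact this.eventually_lt_const (by simpa [dslope_same, h0] using hεpos)
  have e3 : ∀ᶠ s in 𝓝 z, s ∈ ball z r := ball_mem_nhds z hr
  have key : ∀ᶠ s in 𝓝 z, deriv f s = 0 := by
    filter_upwards [e1, e2, e3] with s h1 h2 h3
    have hsU : s ∈ U := hrU (ball_subset_closedBall h3)
    have hd : DifferentiableOn ℂ (dslope f s) U :=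
      (Complex.differentiableOn_dslope (hU.mem_nhds hsU)).2 hf
    obtain ⟨t, ht, ht0⟩ := aux_hurwitz (g := dslope f s) (c := z) (ε := ε) hr (hd.mono hrU) (by
      intro t ht
      have hk := sub_smul_dslope f s t
      have hk2 : ‖t - s‖ * ‖dslope f s t‖ = ‖f t - f s‖ := by rw [← hk, norm_smul]
      have h4 : m / 2 ≤ ‖f t - f s‖ := by
        have := norm_sub_le_norm_sub_add_norm_sub (f t) (f s) (f z)
        linarith [hmin t ht]
      have h5 : ‖t - s‖ ≤ 2 * r := by
        have := norm_sub_le_norm_sub_add_norm_sub t z s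
        rw [mem_sphere, dist_eq_norm] at ht
        rw [mem_ball, dist_comm, dist_eq_norm] at h3
        linarith
      rw [hε, div_le_iff₀ (by positivity)]
      nlinarith [norm_nonneg (dslope f s t)]) (by
      by_cases hsz : s = z
      · subst hsz; exact h2
      · rwa [dslope_of_ne f (Ne.symm hsz), slope_comm, ← dslope_of_ne f hsz])
    by_cases hts : t = s
    · subst hts; simpa [dslope_same] using ht0
    · exfalso
      have hk := sub_smul_dslope f s t
      rw [ht0, smul_zero] at hk
      exact hts (hinj (hrU ht) hsU (sub_eq_zero.1 hk.symm))
  obtain ⟨δ, hδ, hball⟩ := Metric.eventually_nhds_iff_ball.1 (key.and (hU.mem_nhds hz))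
  have hy : z + (δ / 2 : ℝ) ∈ ball z δ := by
    simp [abs_of_pos hδ]; linarith
  have := aux_const (f := f) (fun y hy => hdat y (hball y hy).2)
    (fun y hy => by ext; simp [(hball y hy).1]) hy
  have := hinj (hball _ hy).2 hz this
  simp at this
  exact hδ.ne' this

lemma aux_simple {f : E → F} {J h : E → ℂ} {U : Set E} (hU : IsOpen U)
    (hf : DifferentiableOn ℂ f U) (hinj : InjOn f U) (hJ : DifferentiableOn ℂ J U)
    (hh : DifferentiableOn ℂ h U) (hJf : ∀ x ∈ U, J x = 0 → fderiv ℂ f x = 0)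
    (hJh : ∀ x ∈ U, J x = 0 → h x = 0) {p v w : E} (hp : p ∈ U) (hJp : J p = 0)
    (hv : fderiv ℂ h p v ≠ 0) (hvw : ∀ a b : ℂ, a • w + b • v = 0 → a = 0) : False := by
  have hv0 : v ≠ 0 := by rintro rfl; simp at hv
  have hvn : 0 < ‖v‖ := norm_pos_iff.2 hv0
  set c := ‖fderiv ℂ h p v‖ with hc
  have hcpos : 0 < c := norm_pos_iff.2 hv
  set A := ‖fderiv ℂ h p w‖ with hA
  set η : ℝ := c / (2 * ‖v‖) with hη
  have hηpos : 0 < η := by positivity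
  have hηv : η * ‖v‖ = c / 2 := by rw [hη]; field_simp
  have hst := (aux_strict hU hh hp).isLittleO.def hηpos
  rw [nhds_prod_eq] at hst
  obtain ⟨δ, hδ, hδb⟩ : ∃ δ > 0, ball p δ ⊆ U ∧ ∀ x ∈ ball p δ, ∀ y ∈ ball p δ,
      ‖h x - h y - fderiv ℂ h p (x - y)‖ ≤ η * ‖x - y‖ := by
    obtain ⟨s, hs, hs2⟩ := Filter.mem_prod_same_iff.1 hst
    obtain ⟨δ, hδ, hδs⟩ := Metric.mem_nhds_iff.1 (Filter.inter_mem hs (hU.mem_nhds hp))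
    exact ⟨δ, hδ, fun x hx => (hδs hx).2, fun x hx y hy => hs2 (mk_mem_prod (hδs hx).1 (hδs hy).1)⟩
  obtain ⟨hδU, hδb⟩ := hδb
  set K : ℝ := 2 * (A + η * ‖w‖) / c with hK
  have hKnn : 0 ≤ K := by positivity
  have hlip : ∀ x ∈ ball p δ, ∀ y ∈ ball p δ, h x = 0 → h y = 0 → ∀ a b : ℂ,
      x - y = a • w + b • v → ‖b‖ ≤ K * ‖a‖ := by
    intro x hx y hy hx0 hy0 a b hab
    have h1 := hδb x hx y hy
    rw [hx0, hy0, sub_zero, zero_sub, norm_neg, hab, map_add, map_smul, map_smul] at h1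
    have h2 : ‖b‖ * c - ‖a‖ * A ≤ ‖a • fderiv ℂ h p w + b • fderiv ℂ h p v‖ := by
      have := norm_sub_le_norm_add (b • fderiv ℂ h p v) (a • fderiv ℂ h p w)
      rw [norm_smul b, norm_smul a, add_comm] at this
      exact this
    have h3 : ‖a • w + b • v‖ ≤ ‖a‖ * ‖w‖ + ‖b‖ * ‖v‖ := by
      rw [← norm_smul, ← norm_smul]; exact norm_add_le _ _
    have h4 : ‖b‖ * c - ‖a‖ * A ≤ η * (‖a‖ * ‖w‖ + ‖b‖ * ‖v‖) :=
      h2.trans (h1.trans (by gcongr))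
    rw [hK, div_mul_eq_mul_div, le_div_iff₀ hcpos]
    have h5 : η * (‖b‖ * ‖v‖) = ‖b‖ * (c / 2) := by rw [← hηv]; ring
    nlinarith
  -- radius in direction v
  set r : ℝ := δ / (2 * ‖v‖) / 2 with hr
  have hrpos : 0 < r := by positivity
  have hrv : r * ‖v‖ = δ / 4 := by rw [hr]; field_simp; norm_num
  have hin : ∀ s : ℂ, ‖s‖ * ‖w‖ < δ / 2 → ∀ t ∈ closedBall (0 : ℂ) r,
      p + s • w + t • v ∈ ball p δ := by
    intro s hs t ht
    rw [mem_closedBall, dist_zero_right] at ht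
    rw [mem_ball, dist_eq_norm]
    have h1 : ‖t • v‖ ≤ r * ‖v‖ := by rw [norm_smul]; gcongr
    calc ‖p + s • w + t • v - p‖ = ‖s • w + t • v‖ := by congr 1; abel
      _ ≤ ‖s • w‖ + ‖t • v‖ := norm_add_le _ _
      _ < δ := by rw [norm_smul]; linarith
  have hin0 : ∀ t ∈ closedBall (0 : ℂ) r, p + (0:ℂ) • w + t • v ∈ ball p δ :=
    hin 0 (by simpa using hδ)
  have hJne : ∀ t ∈ sphere (0 : ℂ) r, J (p + (0:ℂ) • w + t • v) ≠ 0 := by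
    intro t ht h0
    have hb := hin0 t (sphere_subset_closedBall ht)
    have := hlip _ hb p (mem_ball_self hδ) (hJh _ (hδU hb) h0) (hJh p hp hJp) 0 t (by simp)
    rw [mem_sphere, dist_zero_right] at ht
    rw [ht] at this
    simp at this
    linarith
  have hJc : ∀ s : ℂ, ‖s‖ * ‖w‖ < δ / 2 → ∀ t ∈ closedBall (0 : ℂ) r,
      ContinuousAt (fun q : ℂ × ℂ => ‖J (p + q.1 • w + q.2 • v)‖) (s, t) := by
    intro s hs t ht
    refine ContinuousAt.norm ?_
    exact ContinuousAt.comp (f := fun q : ℂ × ℂ => p + q.1 • w + q.2 • v)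
      (hJ.differentiableAt (hU.mem_nhds (hδU (hin s hs t ht)))).continuousAt (by fun_prop)
  have h0w : ‖(0:ℂ)‖ * ‖w‖ < δ / 2 := by simpa using hδ
  obtain ⟨ε, hε, hmin⟩ : ∃ ε : ℝ, 0 < ε ∧ ∀ t ∈ sphere (0:ℂ) r,
      ε < ‖J (p + (0:ℂ) • w + t • v)‖ := by
    have hcont : ContinuousOn (fun t : ℂ => ‖J (p + (0:ℂ) • w + t • v)‖) (sphere 0 r) := by
      intro t ht
      exact (ContinuousAt.comp (f := fun t : ℂ => ((0:ℂ), t)) (hJc 0 h0w t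
        (sphere_subset_closedBall ht)) (by fun_prop)).continuousWithinAt
    obtain ⟨t₀, ht₀, hmin⟩ := (isCompact_sphere (0:ℂ) r).exists_isMinOn
      (NormedSpace.sphere_nonempty.2 hrpos.le) hcont
    have hpos := norm_pos_iff.2 (hJne t₀ ht₀)
    refine ⟨‖J (p + (0:ℂ) • w + t₀ • v)‖ / 2, by linarith, fun t ht => ?_⟩
    have := hmin ht
    simp only [mem_ofPred_eq] at this
    linarith
  have e1 : ∀ᶠ s in 𝓝 (0:ℂ), ∀ t ∈ sphere (0:ℂ) r, ε < ‖J (p + s • w + t • v)‖ := by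
    refine (isCompact_sphere (0:ℂ) r).eventually_forall_of_forall_eventually ?_
    intro t ht
    exact (hJc 0 h0w t (sphere_subset_closedBall ht)).eventually_const_lt (hmin t ht)
  have e2 : ∀ᶠ s in 𝓝 (0:ℂ), ‖J (p + s • w + (0:ℂ) • v)‖ < ε := by
    have : ContinuousAt (fun s : ℂ => ‖J (p + s • w + (0:ℂ) • v)‖) 0 :=
      ContinuousAt.comp (f := fun s : ℂ => (s, (0:ℂ))) (hJc 0 h0w 0
        (mem_closedBall_self hrpos.le)) (by fun_prop)
    exact this.eventually_lt_const (by simpa [hJp] using hε)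
  have e3 : ∀ᶠ s in 𝓝 (0:ℂ), ‖s‖ * ‖w‖ < δ / 2 := by
    have : ContinuousAt (fun s : ℂ => ‖s‖ * ‖w‖) 0 := by fun_prop
    exact this.eventually_lt_const h0w
  obtain ⟨δ', hδ', hall⟩ := Metric.eventually_nhds_iff_ball.1 (e1.and (e2.and e3))
  have hex : ∀ s ∈ ball (0:ℂ) δ', ∃ t ∈ closedBall (0:ℂ) r, J (p + s • w + t • v) = 0 := by
    intro s hs
    obtain ⟨h1, h2, h3⟩ := hall s hs
    refine aux_hurwitz (g := fun t => J (p + s • w + t • v)) hrpos ?_ (fun t ht => (h1 t ht).le) h2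
    intro t ht
    exact (aux_line_deriv (hJ.differentiableAt
      (hU.mem_nhds (hδU (hin s h3 t ht))))).differentiableAt.differentiableWithinAt
  choose! τ hτ hτ0 using hex
  set x : ℂ → E := fun s => p + s • w + τ s • v with hx
  have hxb : ∀ s ∈ ball (0:ℂ) δ', x s ∈ ball p δ := fun s hs =>
    hin s (hall s hs).2.2 _ (hτ s hs)
  have hxlip : ∀ s ∈ ball (0:ℂ) δ', ∀ s' ∈ ball (0:ℂ) δ',
      ‖x s' - x s‖ ≤ (‖w‖ + K * ‖v‖) * ‖s' - s‖ := by
    intro s hs s' hs'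
    have hd : x s' - x s = (s' - s) • w + (τ s' - τ s) • v := by
      simp only [hx, sub_smul]; abel
    have h1 := hlip _ (hxb s' hs') _ (hxb s hs) (hJh _ (hδU (hxb s' hs')) (hτ0 s' hs'))
      (hJh _ (hδU (hxb s hs)) (hτ0 s hs)) _ _ hd
    rw [hd]
    calc _ ≤ ‖s' - s‖ * ‖w‖ + ‖τ s' - τ s‖ * ‖v‖ := by
          rw [← norm_smul, ← norm_smul]; exact norm_add_le _ _
      _ ≤ ‖s' - s‖ * ‖w‖ + (K * ‖s' - s‖) * ‖v‖ := by gcongr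
      _ = _ := by ring
  have hder : ∀ s ∈ ball (0:ℂ) δ', HasFDerivAt (fun s => f (x s)) (0 : ℂ →L[ℂ] F) s := by
    intro s hs
    have hO : (fun s' => x s' - x s) =O[𝓝 s] fun s' => s' - s := by
      refine Asymptotics.IsBigO.of_bound (‖w‖ + K * ‖v‖) ?_
      filter_upwards [isOpen_ball.mem_nhds hs] with s' hs' using hxlip s hs s' hs'
    have hcx : Tendsto x (𝓝 s) (𝓝 (x s)) := by
      have h1 : Tendsto (fun s' : ℂ => s' - s) (𝓝 s) (𝓝 0) := by
        have : ContinuousAt (fun s' : ℂ => s' - s) s := by fun_prop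
        simpa [ContinuousAt] using this
      exact tendsto_sub_nhds_zero_iff.1 (hO.trans_tendsto h1)
    have hxU := hδU (hxb s hs)
    have hfd : HasFDerivAt f (0 : E →L[ℂ] F) (x s) := by
      have := (hf.differentiableAt (hU.mem_nhds hxU)).hasFDerivAt
      rwa [hJf _ hxU (hτ0 s hs)] at this
    have h2 := (hfd.isLittleO.comp_tendsto hcx).trans_isBigO hO
    refine HasFDerivAt.of_isLittleO ?_
    simpa [Function.comp_def] using h2
  have hy : ((δ' / 2 : ℝ) : ℂ) ∈ ball (0:ℂ) δ' := by
    simp [abs_of_pos hδ']; linarith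
  have hcst := aux_const (f := fun s => f (x s)) (fun s hs => (hder s hs).differentiableAt)
    (fun s hs => (hder s hs).fderiv) hy
  have h00 : (0:ℂ) ∈ ball (0:ℂ) δ' := mem_ball_self hδ'
  have hxx := hinj (hδU (hxb _ hy)) (hδU (hxb _ h00)) hcst
  have hd : ((δ' / 2 : ℝ) : ℂ) • w + (τ ((δ' / 2 : ℝ) : ℂ) - τ 0) • v = 0 := by
    rw [← sub_eq_zero] at hxx
    rw [← hxx]
    simp only [hx, sub_smul, zero_smul]; abel
  have := hvw _ _ hd
  rw [Complex.ofReal_eq_zero] at this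
  linarith

lemma aux_exists_simple {J : E → ℂ} {U : Set E} (hU : IsOpen U) (hJ : DifferentiableOn ℂ J U)
    {z v : E} {R : ℝ} (hR : ball z R ⊆ U) (hvR : ‖v‖ < R) (hJv : J (z + v) ≠ 0) (hJz : J z = 0) :
    ∃ (h : E → ℂ) (p : E), DifferentiableOn ℂ h U ∧ (∀ y ∈ U, J y = 0 → h y = 0) ∧ p ∈ U ∧
      J p = 0 ∧ fderiv ℂ h p v ≠ 0 := by
  by_contra! hcon
  have hv0 : v ≠ 0 := by rintro rfl; simp [hJz] at hJv
  have hvn : 0 < ‖v‖ := norm_pos_iff.2 hv0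
  have hRpos : 0 < R := hvn.trans hvR
  let H : ℕ → E → ℂ := fun k => (fun (h : E → ℂ) (x : E) => fderiv ℂ h x v)^[k] J
  have hsucc : ∀ k, H (k + 1) = fun x => fderiv ℂ (H k) x v := fun k => by
    simp only [H, Function.iterate_succ_apply']
  have hH : ∀ k, DifferentiableOn ℂ (H k) U ∧ ∀ y ∈ U, J y = 0 → H k y = 0 := by
    intro k
    induction k with
    | zero => exact ⟨hJ, fun y _ h => h⟩
    | succ k ih =>
      rw [hsucc]
      exact ⟨aux_dir hU ih.1 v, fun y hy h0 => hcon (H k) y ih.1 ih.2 hy h0⟩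
  let T : Set ℂ := ball 0 (R / ‖v‖)
  have hT : ∀ t ∈ T, z + t • v ∈ U := by
    intro t ht
    apply hR
    simp only [T, mem_ball, dist_zero_right, lt_div_iff₀ hvn] at ht
    simpa [mem_ball, dist_eq_norm, norm_smul] using ht
  have h0T : (0:ℂ) ∈ T := mem_ball_self (by positivity)
  have h1T : (1:ℂ) ∈ T := by
    simp only [T, mem_ball, dist_zero_right, lt_div_iff₀ hvn]; simpa using hvR
  let g : ℂ → ℂ := fun t => J (z + t • v)
  have hgd : DifferentiableOn ℂ g T := fun t ht =>
    (aux_line_deriv (hJ.differentiableAt (hU.mem_nhds (hT t ht)))).differentiableAt.differentiableWithinAt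
  have hga : AnalyticOnNhd ℂ g T := hgd.analyticOnNhd isOpen_ball
  have hit : ∀ k, ∀ t ∈ T, iteratedDeriv k g t = H k (z + t • v) := by
    intro k
    induction k with
    | zero => intro t _; simp [H, g]
    | succ k ih =>
      intro t ht
      rw [iteratedDeriv_succ, hsucc]
      have : iteratedDeriv k g =ᶠ[𝓝 t] fun t => H k (z + t • v) := by
        filter_upwards [isOpen_ball.mem_nhds ht] with s hs using ih s hs
      rw [this.deriv_eq]
      exact (aux_line_deriv ((hH k).1.differentiableAt (hU.mem_nhds (hT t ht)))).deriv
  have hz : z ∈ U := hR (mem_ball_self hRpos)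
  have hord : analyticOrderAt g 0 = ⊤ := by
    rw [ENat.eq_top_iff_forall_ge]
    intro m
    rw [natCast_le_analyticOrderAt_iff_iteratedDeriv_eq_zero (hga 0 h0T)]
    intro i _
    rw [hit i 0 h0T]
    simpa using (hH i).2 z hz hJz
  have := hga.eqOn_zero_of_preconnected_of_eventuallyEq_zero (convex_ball _ _).isPreconnected h0T
    (analyticOrderAt_eq_top.1 hord) h1T
  simp [g] at this
  exact hJv this



lemma aux_det [FiniteDimensional ℂ E] [FiniteDimensional ℂ F]
    (hEF : Module.finrank ℂ E = Module.finrank ℂ F) {f : E → F} {U : Set E} (hU : IsOpen U)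
    (hf : DifferentiableOn ℂ f U) : ∃ J : E → ℂ, DifferentiableOn ℂ J U ∧
      ∀ x, J x = 0 ↔ ∃ v ≠ 0, fderiv ℂ f x v = 0 := by
  have : CompleteSpace F := FiniteDimensional.complete ℂ F
  let e : F ≃L[ℂ] E := ContinuousLinearEquiv.ofFinrankEq hEF.symm
  let b := Module.finBasis ℂ E
  let L : E → (E →ₗ[ℂ] E) := fun x => ((e : F →L[ℂ] E).comp (fderiv ℂ f x) : E →L[ℂ] E)
  refine ⟨fun x => LinearMap.det (L x), ?_, ?_⟩
  · have h1 : (fun x => LinearMap.det (L x)) = fun x => ∑ σ : Equiv.Perm _,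
        ((Equiv.Perm.sign σ : ℤ) : ℂ) * ∏ i, b.repr (e (fderiv ℂ f x (b i))) (σ i) := by
      funext x
      rw [← LinearMap.det_toMatrix b, Matrix.det_apply']
      simp [LinearMap.toMatrix_apply, L]
    rw [h1]
    have hent : ∀ i j, DifferentiableOn ℂ (fun x => b.repr (e (fderiv ℂ f x (b i))) j) U := by
      intro i j
      let φ : F →L[ℂ] ℂ := LinearMap.toContinuousLinearMap ((b.coord j).comp (e : F →ₗ[ℂ] E))
      exact φ.differentiable.comp_differentiableOn (aux_dir hU hf (b i))
    refine DifferentiableOn.fun_sum fun σ _ => DifferentiableOn.const_mul ?_ _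
    induction (Finset.univ : Finset (Fin (Module.finrank ℂ E))) using Finset.induction_on with
    | empty => simpa using differentiableOn_const 1
    | insert a t ha ih =>
      simp only [Finset.prod_insert ha]
      exact (hent _ _).mul ih
  · intro x
    constructor
    · intro h
      have := LinearMap.bot_lt_ker_of_det_eq_zero h
      obtain ⟨v, hv, hv0⟩ := (Submodule.ne_bot_iff _).1 this.ne'
      refine ⟨v, hv0, ?_⟩
      simpa [L] using hv
    · rintro ⟨v, hv0, hv⟩
      by_contra hne
      have hu : IsUnit (L x) := (LinearMap.isUnit_iff_isUnit_det _).2 (isUnit_iff_ne_zero.2 hne)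
      have hinj := ((Module.End.isUnit_iff _).1 hu).1
      exact hv0 (hinj (by simp [L, hv]))

def OsgoodProp (n : ℕ) : Prop :=
  ∀ (E F : Type) [NormedAddCommGroup E] [NormedSpace ℂ E] [NormedAddCommGroup F]
  [NormedSpace ℂ F] [FiniteDimensional ℂ E] [FiniteDimensional ℂ F],
  Module.finrank ℂ E = n → Module.finrank ℂ F = n → ∀ (f : E → F) (U : Set E), IsOpen U →
  DifferentiableOn ℂ f U → InjOn f U → ∀ z ∈ U, ∀ v, fderiv ℂ f z v = 0 → v = 0

lemma aux_slice {n : ℕ} (ih : OsgoodProp n) [FiniteDimensional ℂ E] [FiniteDimensional ℂ F]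
    (hE : Module.finrank ℂ E = n + 1) (hF : Module.finrank ℂ F = n + 1) {f : E → F} {U : Set E}
    (hU : IsOpen U) (hf : DifferentiableOn ℂ f U) (hinj : InjOn f U) {z : E} (hz : z ∈ U)
    (hne : fderiv ℂ f z ≠ 0) (v : E) (hv : fderiv ℂ f z v = 0) : v = 0 := by
  have : CompleteSpace E := FiniteDimensional.complete ℂ E
  have : CompleteSpace F := FiniteDimensional.complete ℂ F
  obtain ⟨u, hu⟩ : ∃ u, fderiv ℂ f z u ≠ 0 := by
    by_contra! h
    exact hne (ContinuousLinearMap.ext h)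
  obtain ⟨ℓ, hℓ⟩ : ∃ ℓ : F →L[ℂ] ℂ, ℓ (fderiv ℂ f z u) ≠ 0 := by
    obtain ⟨g, -, hg⟩ := exists_dual_vector ℂ (fderiv ℂ f z u) (norm_ne_zero_iff.2 hu)
    refine ⟨g, ?_⟩
    rw [hg]; simpa using hu
  let L : E →L[ℂ] ℂ := ℓ.comp (fderiv ℂ f z)
  let K : Submodule ℂ E := LinearMap.ker (L : E →ₗ[ℂ] ℂ)
  let M : Submodule ℂ F := LinearMap.ker (ℓ : F →ₗ[ℂ] ℂ)
  have hfr : ∀ {V : Type} [NormedAddCommGroup V] [NormedSpace ℂ V] [FiniteDimensional ℂ V]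
      (φ : V →ₗ[ℂ] ℂ), Module.finrank ℂ V = n + 1 → φ ≠ 0 →
      Module.finrank ℂ (LinearMap.ker φ) = n := by
    intro V _ _ _ φ hV hφ
    have h1 := LinearMap.finrank_range_add_finrank_ker φ
    have h2 : LinearMap.range φ = ⊤ := LinearMap.range_eq_top.2 (LinearMap.surjective hφ)
    rw [h2, finrank_top, Module.finrank_self] at h1
    omega
  have hKn : Module.finrank ℂ K = n := hfr _ hE (fun h => hℓ (by
    have := LinearMap.congr_fun h u; simpa [L] using this))
  have hMn : Module.finrank ℂ M = n := hfr _ hF (fun h => hℓ (by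
    have := LinearMap.congr_fun h (fderiv ℂ f z u); simpa using this))
  obtain ⟨π₀, hπ₀⟩ := LinearMap.exists_leftInverse_of_injective K.subtype (by simp)
  obtain ⟨q₀, hq₀⟩ := LinearMap.exists_leftInverse_of_injective M.subtype (by simp)
  let π : E →L[ℂ] K := LinearMap.toContinuousLinearMap π₀
  let q : F →L[ℂ] M := LinearMap.toContinuousLinearMap q₀
  have hπ : ∀ k : K, π k = k := fun k => LinearMap.congr_fun hπ₀ k
  have hq : ∀ k : M, q k = k := fun k => LinearMap.congr_fun hq₀ k
  let Φ : E → ℂ × K := fun x => (ℓ (f x), π x)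
  let A : E →L[ℂ] ℂ × K := L.prod π
  have hAinj : Function.Injective A := by
    rw [injective_iff_map_eq_zero]
    intro x hx
    have h1 : L x = 0 := congrArg Prod.fst hx
    have h2 : π x = 0 := congrArg Prod.snd hx
    have h3 := hπ ⟨x, h1⟩
    simp only [h2] at h3
    exact (congrArg Subtype.val h3).symm
  let Ae : E ≃L[ℂ] ℂ × K := (LinearEquiv.ofInjectiveOfFinrankEq (A : E →ₗ[ℂ] ℂ × K) hAinj (by
    rw [Module.finrank_prod, hKn, hE, Module.finrank_self, add_comm])).toContinuousLinearEquiv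
  have hAe : (Ae : E →L[ℂ] ℂ × K) = A := by ext x <;> rfl
  have hfz := hf.differentiableAt (hU.mem_nhds hz)
  have hΦ : HasFDerivAt Φ (Ae : E →L[ℂ] ℂ × K) z := by
    rw [hAe]
    exact (ℓ.hasFDerivAt.comp z hfz.hasFDerivAt).prodMk π.hasFDerivAt
  have hΦc : ContDiffAt ℂ 1 Φ z :=
    (ℓ.contDiff.contDiffAt.comp z (aux_contDiffAt hU hf hz)).prodMk π.contDiff.contDiffAt
  let P := hΦc.toOpenPartialHomeomorph Φ hΦ (by norm_num)
  have hPcoe : (P : E → ℂ × K) = Φ := rfl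
  have hzP : z ∈ P.source := hΦc.mem_toOpenPartialHomeomorph_source hΦ (by norm_num)
  have hsymm : ContDiffAt ℂ 1 P.symm (Φ z) := by
    exact hΦc.to_localInverse hΦ (by norm_num)
  let γ : K → ℂ × K := fun k => (ℓ (f z), π z + k)
  have hγc : Continuous γ := by fun_prop
  have hγd : Differentiable ℂ γ := by fun_prop
  have hγ0 : γ 0 = Φ z := by simp [γ, Φ]
  have hsz : P.symm (Φ z) = z := P.left_inv hzP
  let g : K → E := fun k => P.symm (γ k)
  have hg0 : g 0 = z := by simp only [g, hγ0, hsz]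
  have hev : ∀ᶠ y in 𝓝 (Φ z), DifferentiableAt ℂ P.symm y ∧ y ∈ P.target ∧ P.symm y ∈ U := by
    refine ((hsymm.eventually (by simp)).mono fun y hy => hy.differentiableAt (by norm_num)).and
      (Filter.Eventually.and (P.open_target.mem_nhds (P.map_source hzP)) ?_)
    exact hsymm.continuousAt.preimage_mem_nhds (by rw [hsz]; exact hU.mem_nhds hz)
  obtain ⟨V, hVsub, hVo, hVz⟩ := _root_.mem_nhds_iff.1 hev
  let W : Set K := γ ⁻¹' V
  have hWo : IsOpen W := hVo.preimage hγc
  have hW0 : (0 : K) ∈ W := by simp only [W, mem_preimage, hγ0]; exact hVz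
  have hΦg : ∀ k ∈ W, Φ (g k) = γ k := fun k hk => P.right_inv (hVsub hk).2.1
  have hgU : ∀ k ∈ W, g k ∈ U := fun k hk => (hVsub hk).2.2
  have hgd : ∀ k ∈ W, DifferentiableAt ℂ g k := fun k hk =>
    DifferentiableAt.comp (f := γ) k (hVsub hk).1 (hγd k)
  let G : K → M := fun k => q (f (g k) - f z)
  have hGd : ∀ k ∈ W, DifferentiableAt ℂ G k := fun k hk =>
    q.differentiableAt.comp k (((hf.differentiableAt (hU.mem_nhds (hgU k hk))).comp k
      (hgd k hk)).sub_const (f z))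
  have hGv : ∀ k ∈ W, (G k : F) = f (g k) - f z := by
    intro k hk
    have h1 : ℓ (f (g k)) = ℓ (f z) := congrArg Prod.fst (hΦg k hk)
    have h2 : f (g k) - f z ∈ M := by simp [M, h1]
    exact congrArg Subtype.val (hq ⟨_, h2⟩)
  have hGinj : InjOn G W := by
    intro k hk k' hk' he
    have h1 : f (g k) = f (g k') := by
      have := congrArg (Subtype.val) he
      rw [hGv k hk, hGv k' hk'] at this
      simpa using this
    have h2 := hinj (hgU k hk) (hgU k' hk') h1
    have h3 : γ k = γ k' := by rw [← hΦg k hk, ← hΦg k' hk', h2]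
    simpa [γ] using h3
  have hIH := ih K M hKn hMn G W hWo
    (fun k hk => (hGd k hk).differentiableWithinAt) hGinj 0 hW0
  have hvK : v ∈ K := by simp [K, L, hv]
  -- derivative of g at 0
  have hgder := (hgd 0 hW0).hasFDerivAt
  have hg' : fderiv ℂ g 0 ⟨v, hvK⟩ = v := by
    apply hAinj
    have h1 : HasFDerivAt (fun k => Φ (g k)) (A.comp (fderiv ℂ g 0)) 0 := by
      have : HasFDerivAt Φ A (g 0) := by rw [hg0, ← hAe]; exact hΦ
      exact this.comp 0 hgder
    have h2 : HasFDerivAt γ ((0 : K →L[ℂ] ℂ).prod (ContinuousLinearMap.id ℂ K)) 0 := by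
      exact (hasFDerivAt_const _ _).prodMk ((hasFDerivAt_id _).const_add _)
    have h3 : (fun k => Φ (g k)) =ᶠ[𝓝 0] γ := by
      filter_upwards [hWo.mem_nhds hW0] with k hk using hΦg k hk
    have h4 := (h2.congr_of_eventuallyEq h3).unique h1
    have h5 := congrArg (fun T : K →L[ℂ] ℂ × K => T ⟨v, hvK⟩) h4
    simp only [ContinuousLinearMap.comp_apply] at h5
    rw [← h5]
    refine Prod.ext ?_ ?_
    · simp [A, L, hv]
    · exact (hπ ⟨v, hvK⟩).symm
  have hGder : fderiv ℂ G 0 ⟨v, hvK⟩ = 0 := by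
    have hfg : HasFDerivAt f (fderiv ℂ f z) (g 0) := by rw [hg0]; exact hfz.hasFDerivAt
    have h1 : HasFDerivAt G (q.comp ((fderiv ℂ f z).comp (fderiv ℂ g 0))) 0 :=
      q.hasFDerivAt.comp 0 ((hfg.comp 0 hgder).sub_const (f z))
    rw [h1.fderiv]
    simp [hg', hv]
  exact congrArg Subtype.val (hIH _ hGder)

theorem osgood (n : ℕ) : OsgoodProp n := by
  induction n with
  | zero =>
    intro E F _ _ _ _ _ _ hE hF f U hU hf hinj z hz v hv
    have := Module.finrank_zero_iff.1 hE
    exact Subsingleton.elim _ _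
  | succ n ih =>
    intro E F _ _ _ _ _ _ hE hF f U hU hf hinj z hz v hv
    by_contra hv0
    have hzero : ∀ x ∈ U, (∃ v ≠ 0, fderiv ℂ f x v = 0) → fderiv ℂ f x = 0 := by
      rintro x hx ⟨v, hv0, hv⟩
      by_contra hne
      exact hv0 (aux_slice ih hE hF hU hf hinj hx hne v hv)
    have hfz : fderiv ℂ f z = 0 := hzero z hz ⟨v, hv0, hv⟩
    rcases Nat.eq_zero_or_pos n with hn | hn
    · subst hn
      let e : F ≃L[ℂ] ℂ := ContinuousLinearEquiv.ofFinrankEq (by rw [hF, Module.finrank_self])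
      have hd : ∀ t ∈ (fun ζ : ℂ => z + ζ • v) ⁻¹' U, HasDerivAt (fun ζ : ℂ => e (f (z + ζ • v)))
          (e (fderiv ℂ f (z + t • v) v)) t := fun t ht =>
        e.hasFDerivAt.comp_hasDerivAt t
          (aux_line_deriv (hf.differentiableAt (hU.mem_nhds ht)))
      have hz0 : (0:ℂ) ∈ (fun ζ : ℂ => z + ζ • v) ⁻¹' U := by simpa using hz
      refine aux_one (f := fun ζ : ℂ => e (f (z + ζ • v))) (U := (fun ζ : ℂ => z + ζ • v) ⁻¹' U)
        (hU.preimage (by fun_prop)) (fun t ht => (hd t ht).differentiableAt.differentiableWithinAt)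
        ?_ hz0 ?_
      · intro t ht s hs he
        have h1 := hinj ht hs (e.injective he)
        exact smul_left_injective ℂ hv0 (add_left_cancel h1)
      · rw [(hd 0 hz0).deriv]
        simp [hfz]
    · obtain ⟨J, hJ, hJiff⟩ := aux_det (hE.trans hF.symm) hU hf
      have hJz : J z = 0 := (hJiff z).2 ⟨v, hv0, hv⟩
      have hJf : ∀ x ∈ U, J x = 0 → fderiv ℂ f x = 0 := fun x hx h0 =>
        hzero x hx ((hJiff x).1 h0)
      obtain ⟨R, hR, hRU⟩ := Metric.isOpen_iff.1 hU z hz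
      obtain ⟨x, hx, hJx⟩ : ∃ x ∈ ball z R, J x ≠ 0 := by
        by_contra! hall
        have hnt : Nontrivial E := ⟨v, 0, hv0⟩
        obtain ⟨y, hy⟩ := (NormedSpace.exists_lt_norm ℂ E 0)
        let y' : E := z + ((R / (2 * ‖y‖) : ℝ) : ℂ) • y
        have hy' : y' ∈ ball z R := by
          simp only [y', mem_ball, dist_eq_norm, add_sub_cancel_left, norm_smul, Complex.norm_real,
            Real.norm_eq_abs]
          rw [abs_of_pos (by positivity), div_mul_eq_mul_div, div_lt_iff₀ (by positivity)]
          nlinarith [mul_pos hR hy]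
        have h1 := aux_const (f := f) (fun w hw => hf.differentiableAt (hU.mem_nhds (hRU hw)))
          (fun w hw => hJf w (hRU hw) (hall w hw)) hy'
        have h2 := hinj (hRU hy') hz h1
        simp only [y', add_eq_left, smul_eq_zero, Complex.ofReal_eq_zero] at h2
        rcases h2 with h2 | h2
        · have : 0 < R / (2 * ‖y‖) := by positivity
          exact this.ne' h2
        · simp [h2] at hy
      obtain ⟨h, p, hh, hJh, hp, hJp, hne⟩ := aux_exists_simple hU hJ (v := x - z) hRU
        (by simpa [dist_eq_norm] using hx) (by simpa using hJx) hJz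
      have hxz : x - z ≠ 0 := by intro h0; simp [h0] at hne
      obtain ⟨w, hw⟩ : ∃ w, w ∉ Submodule.span ℂ {x - z} := by
        by_contra! hall
        have htop : Submodule.span ℂ {x - z} = ⊤ := by
          rw [eq_top_iff]; exact fun w _ => hall w
        have := finrank_span_singleton (K := ℂ) hxz
        rw [htop, finrank_top] at this
        omega
      refine aux_simple hU hf hinj hJ hh hJf hJh hp hJp hne (w := w) ?_
      intro a b hab
      by_contra ha
      apply hw
      rw [Submodule.mem_span_singleton]
      refine ⟨-(a⁻¹ * b), ?_⟩
      have h1 : a • w = -(b • (x - z)) := eq_neg_of_add_eq_zero_left hab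
      have h2 : w = a⁻¹ • (a • w) := by rw [smul_smul, inv_mul_cancel₀ ha, one_smul]
      rw [h2, h1, smul_neg, smul_smul, neg_smul]

end Osgood



lemma aux_inv {E : Type} [NormedAddCommGroup E] [NormedSpace ℂ E] [FiniteDimensional ℂ E]
    {f : E → E} {U : Set E} (hU : IsOpen U) (hf : DifferentiableOn ℂ f U) (hinj : InjOn f U) :
    ∃ g : E → E, ∀ x ∈ U, g (f x) = x ∧ DifferentiableAt ℂ g (f x) := by
  have : CompleteSpace E := FiniteDimensional.complete ℂ E
  refine ⟨Function.invFunOn f U, fun x hx => ?_⟩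
  have hleft : ∀ y ∈ U, Function.invFunOn f U (f y) = y := fun y hy =>
    hinj.leftInvOn_invFunOn hy
  refine ⟨hleft x hx, ?_⟩
  have hinj' : Function.Injective (fderiv ℂ f x) := by
    rw [injective_iff_map_eq_zero]
    exact osgood _ E E rfl rfl f U hU hf hinj x hx
  let A : E ≃L[ℂ] E := (LinearEquiv.ofInjectiveEndo (fderiv ℂ f x : E →ₗ[ℂ] E)
    hinj').toContinuousLinearEquiv
  have hA : (A : E →L[ℂ] E) = fderiv ℂ f x := by ext v; rfl
  have hst : HasStrictFDerivAt f (A : E →L[ℂ] E) x := by rw [hA]; exact aux_strict hU hf hx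
  have hloc := hst.to_localInverse.hasFDerivAt.differentiableAt
  refine hloc.congr_of_eventuallyEq ?_
  have e1 : ∀ᶠ y in 𝓝 (f x), hst.localInverse f A x y ∈ U := by
    have := hst.localInverse_continuousAt
    refine this.preimage_mem_nhds ?_
    rw [hst.localInverse_apply_image]
    exact hU.mem_nhds hx
  filter_upwards [e1, hst.eventually_right_inverse] with y hy1 hy2
  have := hleft _ hy1
  rwa [hy2] at this

lemma aux_kob_bddBelow {n : ℕ} (Ω : Set (Cn n)) (z X : Cn n) :
    BddBelow {r : ℝ | ∃ (α : ℂ) (φ : ℂ → Cn n),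
    DifferentiableOn ℂ φ (Metric.ball 0 1) ∧ Set.MapsTo φ (Metric.ball 0 1) Ω ∧
    φ 0 = z ∧ α • deriv φ 0 = X ∧ r = ‖α‖} := by
  refine ⟨0, ?_⟩
  rintro r ⟨α, φ, -, -, -, -, rfl⟩
  exact norm_nonneg _

lemma aux_pick {n : ℕ} {Ω : Set (Cn n)} (hopen : IsOpen Ω) {z X : Cn n} (hz : z ∈ Ω)
    {f : Cn n → ℂ} (hf : DifferentiableOn ℂ f Ω) (hfm : MapsTo f Ω (ball 0 1))
    {α : ℂ} {φ : ℂ → Cn n} (hφ : DifferentiableOn ℂ φ (ball 0 1)) (hφm : MapsTo φ (ball 0 1) Ω)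
    (h0 : φ 0 = z) (hX : α • deriv φ 0 = X) : ‖fderiv ℂ f z X‖ ≤ ‖α‖ := by
  have hd : ∀ t ∈ ball (0:ℂ) 1, DifferentiableAt ℂ (fun t => f (φ t)) t := fun t ht =>
    (hf.differentiableAt (hopen.mem_nhds (hφm ht))).comp t
      (hφ.differentiableAt (isOpen_ball.mem_nhds ht))
  have h01 : (0:ℂ) ∈ ball (0:ℂ) 1 := mem_ball_self one_pos
  have hder : deriv (fun t => f (φ t)) 0 = fderiv ℂ f z (deriv φ 0) := by
    have h1 : HasFDerivAt f (fderiv ℂ f z) (φ 0) := by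
      rw [h0]; exact (hf.differentiableAt (hopen.mem_nhds hz)).hasFDerivAt
    exact (h1.comp_hasDerivAt 0
      (hφ.differentiableAt (isOpen_ball.mem_nhds h01)).hasDerivAt).deriv
  have hbd : ‖deriv (fun t => f (φ t)) 0‖ ≤ 1 := by
    have hR : ∀ R ∈ Ioo (0:ℝ) 1, ‖deriv (fun t => f (φ t)) 0‖ * R ≤ 1 := by
      intro R hR
      have hsub : closedBall (0:ℂ) R ⊆ ball 0 1 := closedBall_subset_ball hR.2
      have := Complex.norm_deriv_le_of_forall_mem_sphere_norm_le (f := fun t => f (φ t)) (c := 0)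
        (C := 1) hR.1 (DifferentiableOn.diffContOnCl_ball (U := closedBall 0 R)
          (fun t ht => (hd t (hsub ht)).differentiableWithinAt) le_rfl) (by
          intro t ht
          have := hfm (hφm (hsub (sphere_subset_closedBall ht)))
          rw [mem_ball, dist_zero_right] at this
          exact this.le)
      rwa [le_div_iff₀ hR.1] at this
    by_contra! hlt
    set D := ‖deriv (fun t => f (φ t)) 0‖
    have hD : 0 < D := by linarith
    obtain ⟨R, hR1, hR2⟩ := exists_between (inv_lt_one_of_one_lt₀ hlt)
    have h1 := hR R ⟨(inv_pos.2 hD).trans hR1, hR2⟩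
    have h2 : D * D⁻¹ < D * R := mul_lt_mul_of_pos_left hR1 hD
    rw [mul_inv_cancel₀ hD.ne'] at h2
    linarith
  rw [← hX, map_smul, norm_smul, ← hder]
  exact mul_le_of_le_one_right (norm_nonneg _) hbd

lemma aux_kob_nonempty {n : ℕ} {Ω : Set (Cn n)} (hopen : IsOpen Ω) {z : Cn n} (X : Cn n)
    (hz : z ∈ Ω) : {r : ℝ | ∃ (α : ℂ) (φ : ℂ → Cn n),
    DifferentiableOn ℂ φ (Metric.ball 0 1) ∧ Set.MapsTo φ (Metric.ball 0 1) Ω ∧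
    φ 0 = z ∧ α • deriv φ 0 = X ∧ r = ‖α‖}.Nonempty := by
  obtain ⟨R, hR, hRU⟩ := Metric.isOpen_iff.1 hopen z hz
  set ε : ℝ := R / (‖X‖ + 1) with hε
  have hεpos : 0 < ε := by positivity
  have hεX : ε * ‖X‖ < R := by
    rw [hε, div_mul_eq_mul_div, div_lt_iff₀ (by positivity)]
    nlinarith
  refine ⟨_, ((ε⁻¹ : ℝ) : ℂ), fun t => z + t • ((ε : ℂ) • X),
    (aux_line_differentiable _ _).differentiableOn, ?_, by simp, ?_, rfl⟩
  · intro t ht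
    apply hRU
    rw [mem_ball, dist_zero_right] at ht
    rw [mem_ball, dist_eq_norm, add_sub_cancel_left, norm_smul, norm_smul, Complex.norm_real,
      Real.norm_eq_abs, abs_of_pos hεpos]
    have : 0 ≤ ε * ‖X‖ := by positivity
    nlinarith
  · rw [(aux_line_hasDerivAt _ _ _).deriv, smul_smul, ← Complex.ofReal_mul,
      inv_mul_cancel₀ hεpos.ne', Complex.ofReal_one, one_smul]

lemma aux_car_bddAbove {n : ℕ} {Ω : Set (Cn n)} (hopen : IsOpen Ω) {z : Cn n} (X : Cn n)
    (hz : z ∈ Ω) : BddAbove {r : ℝ | ∃ f : Cn n → ℂ,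
    DifferentiableOn ℂ f Ω ∧ Set.MapsTo f Ω (Metric.ball 0 1) ∧
    r = ‖fderiv ℂ f z X‖} := by
  obtain ⟨_, α, φ, h1, h2, h3, h4, rfl⟩ := aux_kob_nonempty hopen X hz
  refine ⟨‖α‖, ?_⟩
  rintro _ ⟨f, hf, hfm, rfl⟩
  exact aux_pick hopen hz hf hfm h1 h2 h3 h4

lemma aux_car_le_kob {n : ℕ} {Ω : Set (Cn n)} (hopen : IsOpen Ω) {z : Cn n} (X : Cn n)
    (hz : z ∈ Ω) : caratheodory Ω z X ≤ kobayashi Ω z X := by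
  refine le_csInf (aux_kob_nonempty hopen X hz) ?_
  rintro _ ⟨α, φ, h1, h2, h3, h4, rfl⟩
  refine csSup_le ⟨0, fun _ => 0, by fun_prop, fun _ _ => by simp, by simp⟩ ?_
  rintro _ ⟨f, hf, hfm, rfl⟩
  exact aux_pick hopen hz hf hfm h1 h2 h3 h4

lemma aux_le_car {n : ℕ} {Ω : Set (Cn n)} (hopen : IsOpen Ω) {z X : Cn n}
    (hz : z ∈ Ω) {f : Cn n → Cn n} (hf : DifferentiableOn ℂ f Ω) (hfm : MapsTo f Ω (ball 0 1)) :
    ‖fderiv ℂ f z X‖ ≤ caratheodory Ω z X := by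
  obtain ⟨ℓ, hℓ1, hℓ⟩ := exists_dual_vector'' ℂ (fderiv ℂ f z X)
  refine le_csSup (aux_car_bddAbove hopen X hz) ⟨fun x => ℓ (f x),
    ℓ.differentiable.comp_differentiableOn hf, ?_, ?_⟩
  · intro x hx
    have := hfm hx
    rw [mem_ball, dist_zero_right] at *
    calc ‖ℓ (f x)‖ ≤ ‖ℓ‖ * ‖f x‖ := ℓ.le_opNorm _
      _ ≤ 1 * ‖f x‖ := by gcongr
      _ < 1 := by linarith
  · have h1 : HasFDerivAt (fun x => ℓ (f x)) (ℓ.comp (fderiv ℂ f z)) z :=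
      ℓ.hasFDerivAt.comp z (hf.differentiableAt (hopen.mem_nhds hz)).hasFDerivAt
    rw [h1.fderiv, ContinuousLinearMap.comp_apply, hℓ]
    simp

lemma aux_car_pos {n : ℕ} {Ω : Set (Cn n)} (hopen : IsOpen Ω) (hbdd : Bornology.IsBounded Ω)
    {z X : Cn n} (hz : z ∈ Ω) (hX : X ≠ 0) : 0 < caratheodory Ω z X := by
  obtain ⟨C, hC⟩ := hbdd.exists_norm_le
  have hC0 : 0 ≤ C := (norm_nonneg _).trans (hC z hz)
  have hpos : 0 < (C + 1)⁻¹ := by positivity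
  refine lt_of_lt_of_le ?_ (aux_le_car hopen (X := X) hz
    (f := fun x => (((C + 1)⁻¹ : ℝ) : ℂ) • x) (by fun_prop) ?_)
  · have h1 : HasFDerivAt (fun x : Cn n => (((C + 1)⁻¹ : ℝ) : ℂ) • x)
        ((((C + 1)⁻¹ : ℝ) : ℂ) • ContinuousLinearMap.id ℂ (Cn n)) z :=
      ((((C + 1)⁻¹ : ℝ) : ℂ) • ContinuousLinearMap.id ℂ (Cn n)).hasFDerivAt
    rw [h1.fderiv, norm_pos_iff]
    change (((C + 1)⁻¹ : ℝ) : ℂ) • X ≠ 0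
    exact smul_ne_zero (by exact_mod_cast hpos.ne') hX
  · intro x hx
    rw [mem_ball, dist_zero_right, norm_smul, Complex.norm_real, Real.norm_eq_abs,
      abs_of_pos hpos, inv_mul_lt_iff₀ (by positivity)]
    linarith [hC x hx]

lemma aux_kob_le {n : ℕ} {Ω : Set (Cn n)} (hopen : IsOpen Ω) {z X : Cn n} (hX : X ≠ 0)
    (hz : z ∈ Ω) {f : Cn n → Cn n} (hf : DifferentiableOn ℂ f Ω) (hinj : InjOn f Ω)
    (hfz : f z = 0) {r : ℝ} (hr : 0 < r) (hrf : ball (0 : Cn n) r ⊆ f '' Ω) :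
    r * kobayashi Ω z X ≤ ‖fderiv ℂ f z X‖ := by
  obtain ⟨g, hg⟩ := aux_inv hopen hf hinj
  set Y := fderiv ℂ f z X with hY
  have hY0 : Y ≠ 0 := fun h => hX (osgood _ _ _ rfl rfl f Ω hopen hf hinj z hz X h)
  have hYn : 0 < ‖Y‖ := norm_pos_iff.2 hY0
  have hgfX : fderiv ℂ g 0 Y = X := by
    have h1 : HasFDerivAt (fun x => g (f x)) ((fderiv ℂ g (f z)).comp (fderiv ℂ f z)) z :=
      (hg z hz).2.hasFDerivAt.comp z (hf.differentiableAt (hopen.mem_nhds hz)).hasFDerivAt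
    have h2 : HasFDerivAt (fun x => g (f x)) (ContinuousLinearMap.id ℂ (Cn n)) z := by
      refine (hasFDerivAt_id z).congr_of_eventuallyEq ?_
      filter_upwards [hopen.mem_nhds hz] with x hx using (hg x hx).1
    have h3 := congrArg (fun T : Cn n →L[ℂ] Cn n => T X) (h1.unique h2)
    simpa [hfz] using h3
  set c : ℝ := r / ‖Y‖ with hc
  have hcpos : 0 < c := by positivity
  have hin : ∀ t ∈ ball (0:ℂ) 1, (0 : Cn n) + t • ((c : ℂ) • Y) ∈ f '' Ω := by
    intro t ht
    apply hrf
    rw [mem_ball, dist_zero_right] at *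
    rw [zero_add, norm_smul, norm_smul, Complex.norm_real, Real.norm_eq_abs, abs_of_pos hcpos, hc,
      div_mul_cancel₀ _ hYn.ne']
    nlinarith
  have hgd : ∀ y ∈ f '' Ω, DifferentiableAt ℂ g y := by
    rintro _ ⟨x, hx, rfl⟩; exact (hg x hx).2
  have hle : kobayashi Ω z X ≤ ‖((c⁻¹ : ℝ) : ℂ)‖ := by
    refine csInf_le (aux_kob_bddBelow Ω z X) ⟨((c⁻¹ : ℝ) : ℂ),
      fun t => g (0 + t • ((c : ℂ) • Y)), ?_, ?_, ?_, ?_, rfl⟩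
    · intro t ht
      exact (aux_line_deriv (hgd _ (hin t ht))).differentiableAt.differentiableWithinAt
    · intro t ht
      obtain ⟨x, hx, hxe⟩ := hin t ht
      simp only [← hxe, (hg x hx).1, hx]
    · have := (hg z hz).1
      simpa [hfz] using this
    · rw [(aux_line_deriv (hgd _ (hin 0 (mem_ball_self one_pos)))).deriv]
      simp only [zero_smul, add_zero, map_smul, hgfX]
      rw [smul_smul, ← Complex.ofReal_mul, inv_mul_cancel₀ hcpos.ne', Complex.ofReal_one, one_smul]
  rw [Complex.norm_real, Real.norm_eq_abs, abs_of_pos (inv_pos.2 hcpos), hc, inv_div,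
    le_div_iff₀ hr] at hle
  linarith



end AuxAll

/-- For a bounded domain `Ω`, `σ_Ω·κ_Ω ≤ γ_Ω ≤ κ_Ω`; in particular
`σ_Ω ≤ γ_Ω/κ_Ω ≤ 1` for nonzero vectors. -/
theorem squeezing_caratheodory_kobayashi (n : ℕ) (Ω : Set (Cn n)) (hopen : IsOpen Ω) (hconn : IsConnected Ω)
    (hbdd : Bornology.IsBounded Ω) :
    ∀ z ∈ Ω, ∀ X : Cn n,
      (squeezing Ω z * kobayashi Ω z X ≤ caratheodory Ω z X ∧
        caratheodory Ω z X ≤ kobayashi Ω z X) ∧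
      (X ≠ 0 → squeezing Ω z ≤ caratheodory Ω z X / kobayashi Ω z X ∧
        caratheodory Ω z X / kobayashi Ω z X ≤ 1) := by
  intro z hz X
  have hle := aux_car_le_kob hopen X hz
  by_cases hX : X = 0
  · have hk : kobayashi Ω z X ≤ 0 := by
      refine csInf_le (aux_kob_bddBelow Ω z X) ⟨0, fun _ => z, by fun_prop, fun _ _ => hz, rfl, ?_, ?_⟩
      · simp [hX]
      · simp
    have hc : 0 ≤ caratheodory Ω z X := by
      refine Real.sSup_nonneg ?_
      rintro _ ⟨f, -, -, rfl⟩
      exact norm_nonneg _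
    have hk0 : kobayashi Ω z X = 0 := le_antisymm hk (hc.trans hle)
    refine ⟨⟨by rw [hk0, mul_zero]; exact hc, hle⟩, fun h => absurd hX h⟩
  · have hcpos := aux_car_pos hopen hbdd hz hX
    have hkpos : 0 < kobayashi Ω z X := hcpos.trans_le hle
    have hs : squeezing Ω z ≤ caratheodory Ω z X / kobayashi Ω z X := by
      refine Real.sSup_le ?_ (by positivity)
      rintro r ⟨hr, f, hf, hinj, hfm, hfz, hrf⟩
      rw [le_div_iff₀ hkpos]
      exact (aux_kob_le hopen hX hz hf hinj hfz hr hrf).trans (aux_le_car hopen hz hf hfm)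
    exact ⟨⟨(le_div_iff₀ hkpos).1 hs, hle⟩, fun _ => ⟨hs, div_le_one_of_le₀ hle hkpos.le⟩⟩

end
end
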